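/- arXiv:1608.03882 — 3 statements merged into one kernel-verified Lean document; each statement's English description precedes it below -/
import Mathlib

section
/- Let p and q be integers with 4 < p < q and p not dividing q; write q = kp + r with k ≥ 1 and 0 < r < p, and set m = gcd(p,q), ν = (p−1)(q−1) and ν' = (p−1)(kp−1). Then every integer n with 1 ≤ n ≤ ν is attainable from T = {(p,0),(0,q)}, with the possible exception of: integers n with ν − m < n < ν; integers n with ν' − (p−1) < n < ν'; the integer n = ν − p in case p is even and r = p−1; and the integer n = ν' − (2p−1) in case p is even. -/
open Pointwise MeasureTheory

/-- The Newton polyhedron `Γ₊(T)`: the Minkowski sum of the convex hull of the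
(real images of the) lattice points of `T` with the nonnegative quadrant. -/
noncomputable def GammaPlus (T : Finset (ℕ × ℕ)) : Set (ℝ × ℝ) :=
  convexHull ℝ ((fun v : ℕ × ℕ => ((v.1 : ℝ), (v.2 : ℝ))) '' (T : Set (ℕ × ℕ))) +
    {v : ℝ × ℝ | 0 ≤ v.1 ∧ 0 ≤ v.2}

/-- `a(T)`: the smallest `x` with `(x,0) ∈ Γ₊(T)`. -/
noncomputable def axisA (T : Finset (ℕ × ℕ)) : ℝ :=
  sInf {x : ℝ | (x, (0 : ℝ)) ∈ GammaPlus T}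

/-- `b(T)`: the smallest `y` with `(0,y) ∈ Γ₊(T)`. -/
noncomputable def axisB (T : Finset (ℕ × ℕ)) : ℝ :=
  sInf {y : ℝ | ((0 : ℝ), y) ∈ GammaPlus T}

/-- `S(T)`: the Lebesgue area of the part of the nonnegative quadrant not in `Γ₊(T)`. -/
noncomputable def areaS (T : Finset (ℕ × ℕ)) : ℝ :=
  (volume ({v : ℝ × ℝ | 0 ≤ v.1 ∧ 0 ≤ v.2} \ GammaPlus T)).toReal

/-- The Newton number `ν(T) = 2 S(T) - a(T) - b(T) + 1`. -/
noncomputable def newtonNumber (T : Finset (ℕ × ℕ)) : ℝ :=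
  2 * areaS T - axisA T - axisB T + 1

/-- An integer `n` is attainable from `T` if `n = ν(T ∪ P)` for some finite `P ⊆ ℕ²`. -/
def Attainable (T : Finset (ℕ × ℕ)) (n : ℤ) : Prop :=
  ∃ P : Finset (ℕ × ℕ), (n : ℝ) = newtonNumber (T ∪ P)

/-- absolute value of the determinant of two lattice vectors -/
def dt (e f : ℕ × ℕ) : ℤ := |(e.1 : ℤ) * f.2 - e.2 * f.1|

/-- the defect of a list of edge vectors -/
def df : List (ℕ × ℕ) → ℤ
  | [] => 0
  | e :: E => (E.map (dt e)).sum + df E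

/-- there is a list of edges satisfying `P` with sum `(s,t)` and defect `d` -/
def W (P : ℕ × ℕ → Prop) (s t : ℕ) (d : ℤ) : Prop :=
  ∃ E : List (ℕ × ℕ), (∀ e ∈ E, P e) ∧ E.sum = (s, t) ∧ df E = d

def Pn (e : ℕ × ℕ) : Prop := 0 < e.1 + e.2
def Pu (e : ℕ × ℕ) : Prop := 0 < e.1
def Pp (e : ℕ × ℕ) : Prop := 0 < e.1 ∧ 0 < e.2

lemma df_map (φ : ℕ × ℕ →+ ℕ × ℕ) (h : ∀ e f, dt (φ e) (φ f) = dt e f) (E : List (ℕ × ℕ)) :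
    df (E.map φ) = df E := by
  induction E with
  | nil => rfl
  | cons e E ih =>
    simp only [List.map_cons, df, ih, List.map_map]
    congr 2
    apply List.map_congr_left
    intro f _
    exact h e f

lemma W_map {P Q : ℕ × ℕ → Prop} (φ : ℕ × ℕ →+ ℕ × ℕ)
    (h : ∀ e f, dt (φ e) (φ f) = dt e f) (hPQ : ∀ e, P e → Q (φ e)) {s t : ℕ} {d : ℤ}
    (hW : W P s t d) : W Q (φ (s, t)).1 (φ (s, t)).2 d := by
  obtain ⟨E, h1, h2, h3⟩ := hW
  refine ⟨E.map φ, ?_, ?_, ?_⟩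
  · intro e he
    obtain ⟨f, hf, rfl⟩ := List.mem_map.1 he
    exact hPQ f (h1 f hf)
  · rw [← map_list_sum, h2]
  · rw [df_map φ h, h3]

/-- linear map with matrix rows `(a,b)`, `(c,d)` -/
def lm (a b c d : ℕ) : ℕ × ℕ →+ ℕ × ℕ where
  toFun e := (a * e.1 + b * e.2, c * e.1 + d * e.2)
  map_zero' := by simp
  map_add' e f := by ext <;> simp <;> ring

lemma dt_lm (a b c d : ℕ) (h : |(a : ℤ) * d - b * c| = 1) (e f : ℕ × ℕ) :
    dt (lm a b c d e) (lm a b c d f) = dt e f := by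
  have : (((lm a b c d e).1 : ℕ) : ℤ) * (lm a b c d f).2 - (lm a b c d e).2 * (lm a b c d f).1
      = ((a : ℤ) * d - b * c) * ((e.1 : ℤ) * f.2 - e.2 * f.1) := by
    simp only [lm, AddMonoidHom.coe_mk, ZeroHom.coe_mk]
    push_cast
    ring
  rw [dt, this, abs_mul, h, one_mul, dt]

lemma W_symm {s t : ℕ} {d : ℤ} (h : W Pn s t d) : W Pn t s d := by
  have := W_map (Q := Pn) (lm 0 1 1 0) (dt_lm _ _ _ _ (by norm_num)) (by
    intro e he; simp [Pn, lm] at *; omega) h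
  simpa [lm] using this

lemma W_shear {s t : ℕ} {d : ℤ} (h : W Pn s t d) : W Pn s (t + s) d := by
  have := W_map (Q := Pn) (lm 1 0 1 1) (dt_lm _ _ _ _ (by norm_num)) (by
    intro e he; simp [Pn, lm] at *; omega) h
  simpa [lm, add_comm] using this

/-- multi-shear from `Pu` -/
lemma Wu_shear (c : ℕ) {s t : ℕ} {d : ℤ} (h : W Pu s t d) : W Pu s (t + c * s) d := by
  have := W_map (Q := Pu) (lm 1 0 c 1) (dt_lm _ _ _ _ (by norm_num)) (by
    intro e he; simp [Pu, lm] at *; omega) h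
  simpa [lm, add_comm] using this

lemma Wup_shear (c : ℕ) (hc : 1 ≤ c) {s t : ℕ} {d : ℤ} (h : W Pu s t d) :
    W Pp s (t + c * s) d := by
  have := W_map (Q := Pp) (lm 1 0 c 1) (dt_lm _ _ _ _ (by norm_num)) (by
    intro e he
    have he' : 0 < e.1 := he
    have : 0 < c * e.1 := Nat.mul_pos hc he'
    simp [Pp, lm]; omega) h
  simpa [lm, add_comm] using this

lemma Wnu {s t : ℕ} {d : ℤ} (h : W Pn s t d) : W Pu (s + t) s d := by
  have := W_map (Q := Pu) (lm 1 1 1 0) (dt_lm _ _ _ _ (by norm_num)) (by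
    intro e he; simp [Pu, Pn, lm] at *; omega) h
  simpa [lm, add_comm] using this

lemma sum_dt_axis (w : ℕ) (E : List (ℕ × ℕ)) :
    (E.map (dt (w, 0))).sum = (w : ℤ) * (E.sum).2 := by
  induction E with
  | nil => simp
  | cons e E ih =>
    simp only [List.map_cons, List.sum_cons, ih, Prod.snd_add, dt]
    push_cast
    rw [zero_mul, sub_zero, abs_of_nonneg (by positivity)]
    ring

/-- add a horizontal edge -/
lemma W_axis {P : ℕ × ℕ → Prop} (w : ℕ) (hP : P (w, 0)) {s t : ℕ} {d : ℤ} (h : W P s t d) :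
    W P (s + w) t (d + w * t) := by
  obtain ⟨E, h1, h2, h3⟩ := h
  refine ⟨(w, 0) :: E, ?_, ?_, ?_⟩
  · intro e he
    rcases List.mem_cons.1 he with rfl | he
    · exact hP
    · exact h1 e he
  · simp [h2, add_comm]
  · simp only [df, sum_dt_axis, h2, h3]; ring

lemma W_axis' (w : ℕ) (hw : 0 < w) {s t : ℕ} {d : ℤ} (h : W Pn s t d) :
    W Pn s (t + w) (d + w * s) :=
  W_symm (W_axis w (by simpa [Pn] using hw) (W_symm h))

lemma W_zero (s t : ℕ) : W Pn s t 0 := by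
  by_cases h : 0 < s + t
  · exact ⟨[(s, t)], by simpa [Pn] using h, by simp, by simp [df]⟩
  · have h1 : s = 0 := by omega
    have h2 : t = 0 := by omega
    subst h1 h2
    exact ⟨[], by simp, rfl, rfl⟩

lemma W_two {P : ℕ × ℕ → Prop} {a b c d s t : ℕ} {D : ℤ} (h1 : P (a, b)) (h2 : P (c, d))
    (hs : a + c = s) (ht : b + d = t) (hD : |(a : ℤ) * d - b * c| = D) : W P s t D :=
  ⟨[(a, b), (c, d)], by simp [h1, h2], by simp [hs, ht], by simp [df, dt, hD]⟩

lemma gcd_le_of_dvd_two {a b : ℕ} (c : ℕ) (hc : 0 < c) (h : Nat.gcd a b ∣ c) : Nat.gcd a b ≤ c :=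
  Nat.le_of_dvd hc h

/-- All defects in a triangle. -/
lemma W_all (N : ℕ) : ∀ (s t : ℕ), s + t ≤ N → ∀ d : ℤ,
    (d = 0 ∨ ((Nat.gcd s t : ℤ) ≤ d ∧ d ≤ s * t)) → W Pn s t d := by
  induction N with
  | zero =>
    intro s t h d hd
    have h1 : s = 0 := by omega
    have h2 : t = 0 := by omega
    subst h1 h2
    have : d = 0 := by
      rcases hd with h | ⟨h1, h2⟩
      · exact h
      · simp at h1 h2; omega
    subst this
    exact W_zero 0 0
  | succ N ih =>
    have key : ∀ (s t : ℕ), s ≤ t → s + t ≤ N + 1 → ∀ d : ℤ,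
        (d = 0 ∨ ((Nat.gcd s t : ℤ) ≤ d ∧ d ≤ s * t)) → W Pn s t d := by
      intro s t hst hN d hd
      by_cases hd0 : d = 0
      · subst hd0; exact W_zero s t
      rcases hd with hd | ⟨hd1, hd2⟩
      · exact absurd hd hd0
      rcases Nat.eq_zero_or_pos s with hs | hs
      · subst hs
        simp at hd1 hd2
        omega
      have hdpos : 0 < d := by
        have : 0 < Nat.gcd s t := Nat.gcd_pos_of_pos_left _ hs
        omega
      obtain ⟨x, rfl⟩ := Nat.exists_eq_add_of_le hst
      rcases Nat.lt_or_ge x 1 with hx | hx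
      · -- t = s
        have hx0 : x = 0 := by omega
        subst hx0
        simp at hd1 hd2
        obtain ⟨y, rfl⟩ : ∃ y, s = y + 1 := ⟨s - 1, by omega⟩
        have := W_axis' 1 one_pos (ih (y+1) y (by omega) (d - (y+1)) (by
          by_cases h : d = y + 1
          · left; omega
          · right
            have hg : Nat.gcd (y+1) y = 1 := by simp
            rw [hg]
            push_cast at *
            constructor
            · omega
            · nlinarith))
        simpa using this
      rcases Nat.lt_or_ge x 2 with hx2 | hx2
      · have hx1 : x = 1 := by omega
        subst hx1
        by_cases h1 : d ≤ s
        · have := W_shear (ih s 1 (by omega) d (by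
            right; simp; omega))
          rwa [add_comm] at this
        by_cases h3 : d = s + 2
        · have hs2 : 2 ≤ s := by
            by_contra h
            have : s = 1 := by omega
            subst this
            simp at hd2; omega
          obtain ⟨y, rfl⟩ : ∃ y, s = y + 2 := ⟨s - 2, by omega⟩
          refine W_two (a := 2) (b := 1) (c := y) (d := y + 2) (by simp [Pn]) (by simp [Pn])
            (by omega) (by omega) ?_
          rw [h3]
          push_cast
          rw [abs_of_nonneg] <;> linarith
        · obtain ⟨y, rfl⟩ : ∃ y, s = y + 1 := ⟨s - 1, by omega⟩
          have := W_axis 1 (by simp [Pn]) (ih y (y+1+1) (by omega) (d - (y+1+1)) (by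
            by_cases h : d = y + 1 + 1
            · left; omega
            · right
              have hg : Nat.gcd y (y+1+1) ≤ 2 := by
                apply Nat.le_of_dvd (by norm_num)
                have := Nat.dvd_sub (Nat.gcd_dvd_right y (y+1+1)) (Nat.gcd_dvd_left y (y+1+1))
                simpa [add_assoc] using this
              push_cast at *
              constructor
              · omega
              · nlinarith))
          simpa using this
      · by_cases h1 : d ≤ s * x
        · have := W_shear (ih s x (by omega) d (by
            right
            refine ⟨?_, h1⟩
            simpa using hd1))
          rwa [add_comm] at this
        · obtain ⟨y, rfl⟩ : ∃ y, x = y + 1 := ⟨x - 1, by omega⟩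
          have := W_axis' 1 one_pos (ih s (s+y) (by omega) (d - s) (by
            right
            have hg : Nat.gcd s (s+y) ≤ s := Nat.gcd_le_left _ hs
            have hy : 1 ≤ (y:ℤ) := by omega
            push_cast at *
            constructor
            · have : (Nat.gcd s (s+y) : ℤ) ≤ s := by exact_mod_cast hg
              nlinarith
            · nlinarith))
          simpa [add_assoc] using this
    intro s t hN d hd
    rcases le_total s t with h | h
    · exact key s t h hN d hd
    · refine W_symm (key t s h (by omega) d ?_)
      rwa [Nat.gcd_comm, mul_comm (t : ℤ)]

lemma W_tri (s t : ℕ) (d : ℤ) (h : d = 0 ∨ ((Nat.gcd s t : ℤ) ≤ d ∧ d ≤ s * t)) : W Pn s t d :=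
  W_all _ s t le_rfl d h

/-- combinatorial attainability -/
def R (p q : ℕ) (n : ℤ) : Prop :=
  ∃ (U V : ℕ) (d : ℤ), U ≤ p ∧ V ≤ q ∧ W Pp U V d ∧ n = ((U : ℤ) - 1) * ((V : ℤ) - 1) - d

lemma R_mono {p q p' q' : ℕ} {n : ℤ} (h : R p q n) (hp : p ≤ p') (hq : q ≤ q') : R p' q' n := by
  obtain ⟨U, V, d, h1, h2, h3⟩ := h
  exact ⟨U, V, d, h1.trans hp, h2.trans hq, h3⟩

/-- two-slope corner, `r` edges of slope `k+1`, `t` of slope `k`, carved by `d` -/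
lemma R_A (k r t : ℕ) (hk : 1 ≤ k) (d : ℤ)
    (h : d = 0 ∨ ((Nat.gcd r t : ℤ) ≤ d ∧ d ≤ r * t)) {p q : ℕ} {n : ℤ}
    (hp : r + t ≤ p) (hq : r + k * (r + t) ≤ q)
    (hn : n = ((r : ℤ) + t - 1) * ((r : ℤ) + k * (r + t) - 1) - d) : R p q n := by
  refine ⟨r + t, r + k * (r + t), d, hp, hq, Wup_shear k hk (Wnu (W_tri r t d h)), ?_⟩
  rw [hn]; push_cast; ring

/-- corner with an additional flat edge -/
lemma R_B (c r t w : ℕ) (hc : 1 ≤ c) (hw : 1 ≤ w) (d : ℤ)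
    (h : d = 0 ∨ ((Nat.gcd r t : ℤ) ≤ d ∧ d ≤ r * t)) {p q : ℕ} {n : ℤ}
    (hp : r + t + w ≤ p) (hq : r + (r + t) + c * (r + t + w) ≤ q)
    (hn : n = ((r : ℤ) + t + w - 1) * ((r : ℤ) + (r + t) + c * (r + t + w) - 1)
      - d - w * (r + (r + t))) : R p q n := by
  have := Wup_shear c hc (W_axis w (show Pu (w, 0) from hw) (Wu_shear 1 (Wnu (W_tri r t d h))))
  refine ⟨_, _, _, hp, ?_, this, ?_⟩
  · linarith
  · rw [hn]; push_cast; ring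

lemma gcd_le_two (a : ℕ) : Nat.gcd 2 a ≤ 2 := Nat.gcd_le_left _ (by norm_num)
lemma gcd_le_three (a : ℕ) : Nat.gcd 3 a ≤ 3 := Nat.gcd_le_left _ (by norm_num)
lemma gcd_two_odd (a : ℕ) (h : a % 2 = 1) : Nat.gcd 2 a = 1 := by
  exact Nat.coprime_two_left.2 (Nat.odd_iff.2 h)

lemma partA (p k : ℕ) (hk : 1 ≤ k) (r : ℕ) : ∀ (n : ℤ), 1 ≤ r → r < p →
    ((p : ℤ) - 1) * (k * p - 1) ≤ n →
    (n = ((p : ℤ) - 1) * (k * p + r - 1) ∨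
      n ≤ ((p : ℤ) - 1) * (k * p + r - 1) - Nat.gcd r (p - r)) →
    ¬ (p % 2 = 0 ∧ r + 1 = p ∧ n = ((p : ℤ) - 1) * (k * p + r - 1) - p) →
    R p (k * p + r) n := by
  induction r with
  | zero => intro n h; omega
  | succ r ih =>
    intro n _ hrp hlow hup hex
    obtain ⟨t, rfl⟩ : ∃ t, p = r + 1 + t := ⟨p - (r + 1), by omega⟩
    have ht : r + 1 + t - (r + 1) = t := by omega
    rw [ht] at hup
    have ht1 : 1 ≤ t := by omega
    by_cases hd : ((r + 1 + t : ℕ) - 1 : ℤ) * (k * (r + 1 + t : ℕ) + (r + 1 : ℕ) - 1) - n ≤ (r + 1 : ℕ) * t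
    · refine R_A k (r+1) t hk
        (((r + 1 + t : ℕ) - 1 : ℤ) * (k * (r + 1 + t : ℕ) + (r + 1 : ℕ) - 1) - n) ?_ le_rfl
        (by linarith) ?_
      · rcases hup with h | h
        · left; rw [h]; ring
        · right; exact ⟨by linarith, hd⟩
      · push_cast; ring
    · have hr : 1 ≤ r := by
        by_contra h
        have : r = 0 := by omega
        subst this
        push_cast at *
        apply hd
        nlinarith
      refine R_mono (ih n hr (by omega) hlow ?_ ?_) le_rfl (by omega)
      · right
        have ht' : r + 1 + t - r = t + 1 := by omega
        rw [ht']
        push_cast at *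
        have hg : Nat.gcd r (t + 1) ≤ r := Nat.gcd_le_left _ hr
        have hg' : (Nat.gcd r (t+1) : ℤ) ≤ r := by exact_mod_cast hg
        have hr' : (1 : ℤ) ≤ r := by exact_mod_cast hr
        rcases Nat.lt_or_ge t 2 with h2 | h2
        · have : t = 1 := by omega
          subst this
          have hg2 : Nat.gcd r (1 + 1) ≤ 2 := Nat.gcd_le_right _ (by norm_num)
          rcases Nat.even_or_odd r with he | ho
          · have hn : n ≠ ((r : ℤ) + 1 + (1:ℕ) - 1) * (k * (r + 1 + (1:ℕ)) + (r + 1) - 1) - (r + 1 + (1:ℕ)) := by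
              intro h
              apply hex
              refine ⟨?_, rfl, h⟩
              have := Nat.even_iff.1 he
              omega
            push_cast at *
            have h3 : (Nat.gcd r (1+1) : ℤ) ≤ 2 := by exact_mod_cast hg2
            have h4 : n < ((r : ℤ) + 1 + 1 - 1) * (k * (r + 1 + 1) + (r + 1) - 1) - (r + 1 + 1) := by
              apply lt_of_le_of_ne _ hn
              nlinarith
            nlinarith
          · have hg1 : Nat.gcd r (1+1) = 1 := by
              have := gcd_two_odd r (Nat.odd_iff.1 ho)
              rwa [Nat.gcd_comm] at this
            rw [hg1]
            push_cast at *
            nlinarith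
        · have h2' : (2 : ℤ) ≤ t := by exact_mod_cast h2
          nlinarith
      · rintro ⟨_, h, _⟩
        omega

lemma partC (p : ℕ) (hp : 3 ≤ p) : ∀ n : ℤ, 1 ≤ n → n ≤ (p : ℤ) * (p - 1) →
    ¬ (((p : ℤ) - 1) * (p - 1) - (p - 1) < n ∧ n < ((p : ℤ) - 1) * (p - 1)) →
    ¬ (p % 2 = 0 ∧ n = ((p : ℤ) - 1) * (p - 1) - (2 * p - 1)) → R p (p + 1) n := by
  induction p, hp using Nat.le_induction with
  | base =>
    intro n h1 h2 h3 _
    norm_num at h2 h3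
    by_cases h4 : 4 ≤ n
    · exact R_A 1 1 2 le_rfl (6 - n) (by
        by_cases h6 : n = 6
        · left; omega
        · right
          norm_num at *
          omega) (by norm_num) (by norm_num) (by norm_num)
    · have : n = 1 ∨ n = 2 := by omega
      rcases this with rfl | rfl
      · exact R_A 1 0 2 le_rfl 0 (by simp) (by norm_num) (by norm_num) (by norm_num)
      · exact R_A 1 1 1 le_rfl 0 (by simp) (by norm_num) (by norm_num) (by norm_num)
  | succ a ha ih =>
    intro n h1 h2 h3 h4
    have ha' : (3 : ℤ) ≤ a := by exact_mod_cast ha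
    push_cast at h2 h3 h4
    by_cases hM : (a : ℤ) * a ≤ n
    · refine R_A 1 1 a le_rfl ((a + 1) * a - n) ?_ (by omega) (by omega) ?_
      · by_cases h : n = (a + 1) * a
        · left; linarith
        · right
          simp
          constructor
          · have : n < (a + 1) * a := lt_of_le_of_ne (by linarith) h
            linarith
          · linarith
      · push_cast; ring
    have hM2 : n ≤ (a : ℤ) * a - a := by
      by_contra h
      apply h3
      constructor <;> linarith
    by_cases e1 : (((a : ℤ) - 1) * (a - 1) - (a - 1) < n ∧ n < ((a : ℤ) - 1) * (a - 1))
    · obtain ⟨b, rfl⟩ : ∃ b, a = b + 3 := ⟨a - 3, by omega⟩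
      push_cast at *
      refine R_A 1 2 b le_rfl ((b + 2) * (b + 2) - 1 - n) ?_ (by omega) (by omega) ?_
      · by_cases hz : n = (b + 2) * (b + 2) - 1
        · left; rw [hz]; ring
        · right
          have hlt : n < (b + 2) * (b + 2) - 1 := by
            apply lt_of_le_of_ne _ hz
            nlinarith [e1.2]
          push_cast
          constructor
          · rcases Nat.even_or_odd b with he | ho
            · have hg : (Nat.gcd 2 b : ℤ) ≤ 2 := by exact_mod_cast gcd_le_two b
              have hne : n ≠ (b + 2) * (b + 2) - 2 := by
                intro h
                apply h4
                constructor
                · have := Nat.even_iff.1 he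
                  omega
                · rw [h]; ring
              have : n < (b + 2) * (b + 2) - 2 := lt_of_le_of_ne (by linarith) hne
              linarith
            · rw [gcd_two_odd b (Nat.odd_iff.1 ho)]
              push_cast; linarith
          · nlinarith [e1.1]
      · push_cast; ring
    by_cases e2 : (a % 2 = 0 ∧ n = ((a : ℤ) - 1) * (a - 1) - (2 * a - 1))
    · obtain ⟨hev, hn⟩ := e2
      by_cases h8 : 8 ≤ a
      · obtain ⟨b, rfl⟩ : ∃ b, a = b + 8 := ⟨a - 8, by omega⟩
        push_cast at *
        refine R_A 1 3 (b + 3) le_rfl (b + 6) ?_ (by omega) (by omega) ?_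
        · right
          have hg : (Nat.gcd 3 (b+3) : ℤ) ≤ 3 := by exact_mod_cast gcd_le_three _
          push_cast
          constructor <;> linarith
        · rw [hn]; push_cast; ring
      · have : a = 4 ∨ a = 6 := by omega
        rcases this with rfl | rfl
        · exact R_A 1 1 1 le_rfl 0 (by simp) (by norm_num) (by norm_num) (by rw [hn]; norm_num)
        · exact R_A 2 2 1 (by norm_num) 0 (by simp) (by norm_num) (by norm_num) (by rw [hn]; norm_num)
    · exact R_mono (ih n h1 (by linarith) e1 e2) (by omega) (by omega)

/-- filling the gap below `(p-1)(jp-1)`, `j = c+1` -/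
lemma gap (p c : ℕ) (hp : 5 ≤ p) (t n : ℤ)
    (ht : (1 ≤ t ∧ t ≤ p - 2) ∨ (p % 2 = 0 ∧ t = 2 * p - 1))
    (hn : n = ((p : ℤ) - 1) * ((c + 1) * p - 1) - t) : R p ((c + 2) * p + 1) n := by
  obtain ⟨b, rfl⟩ : ∃ b, p = b + 5 := ⟨p - 5, by omega⟩
  have hg2 := gcd_le_two (b + 2)
  have hg3 := gcd_le_three (b + 1)
  have hg4 := gcd_le_three b
  have hb : (0 : ℤ) ≤ b := by positivity
  rcases Nat.eq_zero_or_pos c with hc | hc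
  · subst hc
    push_cast at *
    rcases ht with ht | ⟨hev, ht⟩
    · by_cases h2 : t = 2 ∧ b % 2 = 0
      · obtain ⟨rfl, hodd⟩ := h2
        by_cases hb0 : b = 0
        · subst hb0
          exact R_A 2 2 1 (by norm_num) 0 (by simp) (by norm_num) (by norm_num) (by rw [hn]; norm_num)
        · refine R_A 1 3 (b + 1) le_rfl (b + 4) ?_ (by omega) (by omega) ?_
          · right; push_cast; omega
          · rw [hn]; push_cast; ring
      · refine R_A 1 2 (b + 2) le_rfl (t - 1) ?_ (by omega) (by omega) ?_
        · by_cases h1 : t = 1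
          · left; omega
          · right
            push_cast
            constructor
            · by_cases hodd : b % 2 = 0
              · omega
              · rw [gcd_two_odd (b + 2) (by omega)]
                push_cast; omega
            · linarith
        · rw [hn]; push_cast; ring
    · by_cases hb1 : b = 1
      · subst hb1
        exact R_A 2 2 1 (by norm_num) 0 (by simp) (by norm_num) (by norm_num)
          (by rw [hn, ht]; norm_num)
      · refine R_A 1 3 b le_rfl (b + 3) ?_ (by omega) (by omega) ?_
        · right; push_cast; omega
        · rw [hn, ht]; push_cast; ring
  · rcases ht with ht | ⟨hev, ht⟩
    · by_cases h3 : t = 3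
      · subst h3
        refine ⟨b + 5, (b + 6) + c * (b + 5), b + 7, le_rfl, by nlinarith, Wup_shear c hc
          (W_two (a := 2) (b := 1) (c := b + 3) (d := b + 5) (by simp [Pu]) (by simp [Pu])
            (by omega) (by omega) ?_), ?_⟩
        · push_cast
          rw [abs_of_nonneg] <;> linarith
        · rw [hn]; push_cast; ring
      · by_cases h1 : t = 1
        · subst h1
          refine R_B c 3 (b + 1) 1 hc le_rfl (b + 2) ?_ (by omega) (by nlinarith) ?_
          · right
            push_cast
            refine ⟨?_, by linarith⟩
            by_cases hb0 : b = 0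
            · subst hb0; norm_num
            · omega
          · rw [hn]; push_cast; ring
        · refine R_B c 2 (b + 2) 1 hc le_rfl (t - 2) ?_ (by omega) (by nlinarith) ?_
          · by_cases h2 : t = 2
            · left; omega
            · right
              push_cast at *
              omega
          · rw [hn]; push_cast; ring
    · refine R_B c 3 b 2 hc (by norm_num) (b + 1) ?_ (by omega) (by nlinarith) ?_
      · right
        by_cases hb1 : b = 1
        · subst hb1; norm_num
        · push_cast; omega
      · rw [hn, ht]; push_cast; ring

lemma partF (p : ℕ) (hp : 5 ≤ p) (k : ℕ) (hk : 1 ≤ k) : ∀ n : ℤ, 1 ≤ n →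
    n ≤ ((p : ℤ) - 1) * (k * p - 1) - (p - 1) →
    ¬ (p % 2 = 0 ∧ n = ((p : ℤ) - 1) * (k * p - 1) - (2 * p - 1)) →
    R p (k * p + 1) n := by
  have hp' : (5 : ℤ) ≤ p := by exact_mod_cast hp
  induction k, hk using Nat.le_induction with
  | base =>
    intro n h1 h2 h3
    push_cast at *
    rw [one_mul] at *
    refine partC p (by omega) n h1 (by nlinarith) (by intro h; linarith [h.1]) ?_
    intro h
    exact h3 (by simpa using h)
  | succ k hk ih =>
    intro n h1 h2 h3
    push_cast at h2 h3
    by_cases hA : ((p : ℤ) - 1) * (k * p - 1) ≤ n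
    · have hc : ((p - 1 : ℕ) : ℤ) = p - 1 := by push_cast [show 1 ≤ p by omega]; ring
      refine R_mono (partA p k hk (p - 1) n (by omega) (by omega) hA ?_ ?_) le_rfl
        (by rw [add_mul]; omega)
      · have hg : Nat.gcd (p - 1) (p - (p - 1)) = 1 := by
          rw [show p - (p - 1) = 1 by omega]; simp
        rw [hg, hc]
        by_cases h : n = ((p : ℤ) - 1) * (k * p + (p - 1) - 1)
        · left; exact h
        · right
          have : n < ((p : ℤ) - 1) * (k * p + (p - 1) - 1) := lt_of_le_of_ne (by linarith) h
          push_cast; linarith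
      · rintro ⟨he, _, h⟩
        rw [hc] at h
        exact h3 ⟨he, by rw [h]; ring⟩
    · obtain ⟨c, rfl⟩ : ∃ c, k = c + 1 := ⟨k - 1, by omega⟩
      by_cases hex : ((1 ≤ ((p : ℤ) - 1) * ((c + 1) * p - 1) - n ∧
          ((p : ℤ) - 1) * ((c + 1) * p - 1) - n ≤ p - 2) ∨
          (p % 2 = 0 ∧ ((p : ℤ) - 1) * ((c + 1) * p - 1) - n = 2 * p - 1))
      · exact gap p c hp _ n hex (by ring)
      · push_cast at *
        refine R_mono (ih n h1 ?_ ?_) le_rfl (by nlinarith)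
        · by_contra h
          apply hex
          left
          constructor <;> linarith
        · rintro ⟨h5, h6⟩
          apply hex
          right
          exact ⟨h5, by linarith⟩

lemma R_main (p q k r m : ℕ) (ν ν' : ℤ)
    (hp : 4 < p)
    (hk : 1 ≤ k) (hr0 : 0 < r) (hrp : r < p) (hq : q = k * p + r)
    (hm : m = Nat.gcd p q)
    (hν : ν = ((p : ℤ) - 1) * ((q : ℤ) - 1))
    (hν' : ν' = ((p : ℤ) - 1) * ((k : ℤ) * p - 1))
    (n : ℤ) (hn1 : 1 ≤ n) (hn2 : n ≤ ν)
    (e1 : ¬ (ν - m < n ∧ n < ν))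
    (e2 : ¬ (ν' - ((p : ℤ) - 1) < n ∧ n < ν'))
    (e3 : ¬ (Even p ∧ r = p - 1 ∧ n = ν - p))
    (e4 : ¬ (Even p ∧ n = ν' - (2 * (p : ℤ) - 1))) : R p q n := by
  subst hq
  have hgc : Nat.gcd p (k * p + r) = Nat.gcd r (p - r) := by
    rw [Nat.gcd_mul_right_add_right, Nat.gcd_comm]
    rw [Nat.gcd_sub_self_right hrp.le]
  push_cast at hν
  by_cases h : ν' ≤ n
  · refine partA p k hk r n hr0 hrp (hν' ▸ h) ?_ ?_
    · rw [← hgc, ← hm, ← hν]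
      by_contra hcon
      push Not at hcon
      exact e1 ⟨hcon.2, lt_of_le_of_ne hn2 hcon.1⟩
    · rintro ⟨h1, h2, h3⟩
      exact e3 ⟨Nat.even_iff.2 h1, by omega, by rw [hν]; exact h3⟩
  · refine R_mono (partF p hp k hk n hn1 ?_ ?_) le_rfl (by omega)
    · rw [← hν']
      by_contra hcon
      exact e2 ⟨by linarith, by linarith⟩
    · rintro ⟨h1, h2⟩
      exact e4 ⟨Nat.even_iff.2 h1, by rw [hν']; exact h2⟩

def pts : List (ℕ × ℕ) → List (ℕ × ℕ)
  | [] => [(0, 0)]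
  | e :: E => (0, e.2 + E.sum.2) :: (pts E).map (fun v => (v.1 + e.1, v.2))

/-- trapezoid below an edge -/
def Trap (u v B : ℝ) : Set (ℝ × ℝ) :=
  {z | 0 ≤ z.1 ∧ z.1 < u ∧ 0 ≤ z.2 ∧ z.2 < B - v / u * z.1}

/-- region strictly below the diagram -/
def Cr : List (ℕ × ℕ) → Set (ℝ × ℝ)
  | [] => ∅
  | e :: E => Trap e.1 e.2 (e.2 + E.sum.2) ∪ Set.preimage (fun z : ℝ × ℝ => z + (-(e.1 : ℝ), 0)) (Cr E)

/-- support function of the diagram -/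
noncomputable def supp (E : List (ℕ × ℕ)) (α β : ℝ) : ℝ :=
  (E.map (fun f => min (β * f.2) (α * f.1))).sum

def Kr (E : List (ℕ × ℕ)) : Set (ℝ × ℝ) :=
  {z | 0 ≤ z.1 ∧ 0 ≤ z.2 ∧ ∀ e ∈ E, supp E e.2 e.1 ≤ e.2 * z.1 + e.1 * z.2}

lemma supp_cons (e : ℕ × ℕ) (E : List (ℕ × ℕ)) (α β : ℝ) :
    supp (e :: E) α β = min (β * e.2) (α * e.1) + supp E α β := by
  simp [supp]

lemma supp_le_snd (E : List (ℕ × ℕ)) (α β : ℝ) : supp E α β ≤ β * E.sum.2 := by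
  induction E with
  | nil => simp [supp]
  | cons e E ih =>
    rw [supp_cons]
    simp only [List.sum_cons, Prod.snd_add]
    push_cast
    have := min_le_left (β * (e.2 : ℝ)) (α * e.1)
    linarith

lemma supp_le_fst (E : List (ℕ × ℕ)) (α β : ℝ) : supp E α β ≤ α * E.sum.1 := by
  induction E with
  | nil => simp [supp]
  | cons e E ih =>
    rw [supp_cons]
    simp only [List.sum_cons, Prod.fst_add]
    push_cast
    have := min_le_right (β * (e.2 : ℝ)) (α * e.1)
    linarith

lemma supp_pts (E : List (ℕ × ℕ)) (α β : ℝ) :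
    ∀ v ∈ pts E, supp E α β ≤ α * v.1 + β * v.2 := by
  induction E with
  | nil => simp [pts, supp]
  | cons e E ih =>
    intro v hv
    rw [pts, List.mem_cons] at hv
    rcases hv with rfl | hv
    · have := supp_le_snd (e :: E) α β
      simpa using this
    · obtain ⟨w, hw, rfl⟩ := List.mem_map.1 hv
      have h1 := ih w hw
      rw [supp_cons]
      push_cast
      have := min_le_right (β * (e.2 : ℝ)) (α * e.1)
      linarith

lemma pts_mem_Kr (E : List (ℕ × ℕ)) (v : ℕ × ℕ) (hv : v ∈ pts E) :
    ((v.1 : ℝ), (v.2 : ℝ)) ∈ Kr E :=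
  ⟨by positivity, by positivity, fun e _ => supp_pts E _ _ v hv⟩

lemma Kr_convex (E : List (ℕ × ℕ)) : Convex ℝ (Kr E) := by
  intro z hz w hw a b ha hb hab
  obtain ⟨z1, z2, z3⟩ := hz
  obtain ⟨w1, w2, w3⟩ := hw
  refine ⟨?_, ?_, ?_⟩
  · simp; positivity
  · simp; positivity
  · intro e he
    have h1 := mul_le_mul_of_nonneg_left (z3 e he) ha
    have h2 := mul_le_mul_of_nonneg_left (w3 e he) hb
    simp only [Prod.fst_add, Prod.smul_fst, Prod.snd_add, Prod.smul_snd, smul_eq_mul]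
    have h3 : supp E e.2 e.1 = a * supp E e.2 e.1 + b * supp E e.2 e.1 := by
      rw [← add_mul, hab, one_mul]
    rw [h3]
    linarith

lemma Kr_up (E : List (ℕ × ℕ)) (z w : ℝ × ℝ) (hz : z ∈ Kr E) (h1 : 0 ≤ w.1) (h2 : 0 ≤ w.2) :
    z + w ∈ Kr E := by
  obtain ⟨z1, z2, z3⟩ := hz
  refine ⟨add_nonneg z1 h1, add_nonneg z2 h2, ?_⟩
  intro e he
  have := z3 e he
  have h3 : 0 ≤ (e.2 : ℝ) * w.1 := by positivity
  have h4 : 0 ≤ (e.1 : ℝ) * w.2 := by positivity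
  simp only [Prod.fst_add, Prod.snd_add]
  linarith

/-- sorted by decreasing steepness -/
def Sorted' (E : List (ℕ × ℕ)) : Prop := E.Pairwise (fun e f => e.1 * f.2 ≤ e.2 * f.1)

lemma supp_first (e : ℕ × ℕ) (E : List (ℕ × ℕ)) (h : ∀ f ∈ E, e.1 * f.2 ≤ e.2 * f.1) :
    supp E e.2 e.1 = e.1 * E.sum.2 := by
  induction E with
  | nil => simp [supp]
  | cons f E ih =>
    rw [supp_cons, ih (fun g hg => h g (List.mem_cons_of_mem _ hg))]
    have : (e.1 : ℝ) * f.2 ≤ e.2 * f.1 := by exact_mod_cast h f List.mem_cons_self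
    rw [min_eq_left this]
    simp only [List.sum_cons, Prod.snd_add]
    push_cast
    ring

lemma Kr_not_Cr (E : List (ℕ × ℕ)) (hs : Sorted' E) (hp : ∀ e ∈ E, Pp e) :
    ∀ z, z ∈ Kr E → z ∉ Cr E := by
  induction E with
  | nil => simp [Cr]
  | cons e E ih =>
    intro z hz hC
    obtain ⟨hs1, hs2⟩ := List.pairwise_cons.1 hs
    have hu : (0 : ℝ) < e.1 := by exact_mod_cast (hp e List.mem_cons_self).1
    obtain ⟨z1, z2, z3⟩ := hz
    rcases hC with ⟨h1, h2, h3, h4⟩ | hC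
    · have h5 := z3 e List.mem_cons_self
      rw [supp_cons, supp_first e E hs1, min_eq_left (by rw [mul_comm])] at h5
      have h6 := mul_lt_mul_of_pos_left h4 hu
      have h7 : (e.1 : ℝ) * (e.2 + E.sum.2 - e.2 / e.1 * z.1) =
          e.1 * (e.2 + E.sum.2) - e.2 * z.1 := by
        field_simp
      rw [h7] at h6
      linarith
    · refine ih hs2 (fun f hf => hp f (List.mem_cons_of_mem _ hf)) _ ⟨?_, ?_, ?_⟩ hC
      · -- nonnegativity from membership in Cr
        have : ∀ (F : List (ℕ × ℕ)) (y : ℝ × ℝ), y ∈ Cr F → 0 ≤ y.1 := by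
          intro F
          induction F with
          | nil => simp [Cr]
          | cons f F ihF =>
            intro y hy
            rcases hy with hy | hy
            · exact hy.1
            · have h8 := ihF _ hy
              simp only [Prod.fst_add] at h8
              have : (0 : ℝ) ≤ f.1 := by positivity
              linarith
        exact this _ _ hC
      · simpa using z2
      · intro f hf
        have h5 := z3 f (List.mem_cons_of_mem _ hf)
        have h6 : (e.1 : ℝ) * f.2 ≤ e.2 * f.1 := by exact_mod_cast hs1 f hf
        rw [supp_cons, min_eq_right (by linarith)] at h5
        simp only [Prod.fst_add, Prod.snd_add, add_zero]
        linarith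

lemma mem_of_not_Cr (E : List (ℕ × ℕ)) (hp : ∀ e ∈ E, Pp e) :
    ∀ G : Set (ℝ × ℝ), Convex ℝ G →
      (∀ z w : ℝ × ℝ, z ∈ G → 0 ≤ w.1 → 0 ≤ w.2 → z + w ∈ G) →
      (∀ v ∈ pts E, ((v.1 : ℝ), (v.2 : ℝ)) ∈ G) →
      ∀ z : ℝ × ℝ, 0 ≤ z.1 → 0 ≤ z.2 → z ∉ Cr E → z ∈ G := by
  induction E with
  | nil =>
    intro G _ hup hpt z h1 h2 _
    have := hup _ z (hpt (0, 0) (by simp [pts])) h1 h2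
    convert this using 1
    ext <;> simp
  | cons e E ih =>
    intro G hG hup hpt z h1 h2 hz
    have hu : (0 : ℝ) < e.1 := by exact_mod_cast (hp e List.mem_cons_self).1
    have hfirst : ((0 : ℝ), (e.2 : ℝ) + E.sum.2) ∈ G := by
      have := hpt (0, e.2 + E.sum.2) (by simp [pts])
      simpa using this
    have hsecond : ((e.1 : ℝ), (E.sum.2 : ℝ)) ∈ G := by
      have : (e.1, E.sum.2) ∈ pts (e :: E) := by
        rw [pts]
        apply List.mem_cons_of_mem
        rw [List.mem_map]
        refine ⟨(0, E.sum.2), ?_, by simp⟩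
        cases E with
        | nil => simp [pts]
        | cons f F => simp [pts]
      exact hpt _ this
    rw [Cr, Set.mem_union, not_or] at hz
    by_cases hx : z.1 < e.1
    · have h3 : e.2 + E.sum.2 - (e.2 : ℝ) / e.1 * z.1 ≤ z.2 := by
        by_contra h
        exact hz.1 ⟨h1, hx, h2, lt_of_not_ge h⟩
      have h4 := hG hfirst hsecond (a := 1 - z.1 / e.1) (b := z.1 / e.1)
        (by rw [sub_nonneg, div_le_one hu]; exact hx.le) (by positivity) (by ring)
      have h5 := hup _ (0, z.2 - (e.2 + E.sum.2 - (e.2 : ℝ) / e.1 * z.1)) h4 le_rfl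
        (sub_nonneg.2 h3)
      convert h5 using 1
      ext
      · simp; field_simp
      · simp; field_simp; ring
    · have h6 := ih (fun f hf => hp f (List.mem_cons_of_mem _ hf))
        ((fun z : ℝ × ℝ => z + ((e.1 : ℝ), 0)) ⁻¹' G) (hG.translate_preimage_left _) ?_ ?_
        (z + (-(e.1 : ℝ), 0)) (by simp; linarith) (by simpa using h2) hz.2
      · rw [Set.mem_preimage] at h6
        convert h6 using 1
        ext <;> simp
      · intro y w hy hw1 hw2
        have := hup _ w hy hw1 hw2
        simp only [Set.mem_preimage]
        convert this using 1
        exact add_right_comm _ _ _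
      · intro v hv
        have := hpt (v.1 + e.1, v.2) (by
          rw [pts]; exact List.mem_cons_of_mem _ (List.mem_map.2 ⟨v, hv, rfl⟩))
        simpa using this

/-- twice the area -/
noncomputable def ar : List (ℕ × ℕ) → ℝ
  | [] => 0
  | e :: E => e.1 * (e.2 + E.sum.2) - e.2 * e.1 / 2 + ar E

lemma Trap_meas (u v B : ℝ) : MeasurableSet (Trap u v B) := by
  have h1 : MeasurableSet {z : ℝ × ℝ | 0 ≤ z.1} :=
    measurableSet_le measurable_const measurable_fst
  have h2 : MeasurableSet {z : ℝ × ℝ | z.1 < u} :=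
    measurableSet_lt measurable_fst measurable_const
  have h3 : MeasurableSet {z : ℝ × ℝ | 0 ≤ z.2} :=
    measurableSet_le measurable_const measurable_snd
  have h4 : MeasurableSet {z : ℝ × ℝ | z.2 < B - v / u * z.1} :=
    measurableSet_lt measurable_snd (by fun_prop)
  exact h1.inter (h2.inter (h3.inter h4))

lemma Trap_vol (u v B : ℝ) (hu : 0 < u) (hv : 0 ≤ v) (hB : v ≤ B) :
    volume (Trap u v B) = ENNReal.ofReal (u * B - v * u / 2) := by
  rw [Measure.volume_eq_prod, Measure.prod_apply (Trap_meas u v B)]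
  have h1 : ∀ x : ℝ, volume (Prod.mk x ⁻¹' Trap u v B) =
      (Set.Ioc 0 u).indicator (fun x => ENNReal.ofReal (B - v / u * x)) x ∨ x = 0 ∨ x = u := by
    intro x
    by_cases h0 : x = 0
    · exact Or.inr (Or.inl h0)
    by_cases h2 : x = u
    · exact Or.inr (Or.inr h2)
    left
    by_cases hx : x ∈ Set.Ioc 0 u
    · rw [Set.indicator_of_mem hx]
      have : Prod.mk x ⁻¹' Trap u v B = Set.Ico 0 (B - v / u * x) := by
        ext y
        simp only [Trap, Set.mem_preimage, Set.mem_ofPred_eq, Set.mem_Ico]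
        have := lt_of_le_of_ne hx.2 h2
        have := hx.1.le
        tauto
      rw [this, Real.volume_Ico, sub_zero]
    · rw [Set.indicator_of_notMem hx]
      have : Prod.mk x ⁻¹' Trap u v B = ∅ := by
        ext y
        simp only [Trap, Set.mem_preimage, Set.mem_ofPred_eq, Set.mem_empty_iff_false, iff_false]
        rintro ⟨h3, h4, _⟩
        exact hx ⟨lt_of_le_of_ne h3 (Ne.symm h0), h4.le⟩
      rw [this, measure_empty]
  have h2 : (fun x : ℝ => volume (Prod.mk x ⁻¹' Trap u v B)) =ᵐ[volume]
      (Set.Ioc 0 u).indicator (fun x => ENNReal.ofReal (B - v / u * x)) := by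
    have h3 : ∀ᵐ x : ℝ, x ≠ 0 := by simp [ae_iff]
    have h4 : ∀ᵐ x : ℝ, x ≠ u := by simp [ae_iff]
    filter_upwards [h3, h4] with x h5 h6
    rcases h1 x with h | h | h
    · exact h
    · exact absurd h h5
    · exact absurd h h6
  rw [lintegral_congr_ae h2, lintegral_indicator measurableSet_Ioc,
    ← ofReal_integral_eq_lintegral_ofReal]
  · rw [← intervalIntegral.integral_of_le hu.le]
    congr 1
    rw [intervalIntegral.integral_sub (by simp) (by apply Continuous.intervalIntegrable; fun_prop),
      intervalIntegral.integral_const_mul, integral_id, intervalIntegral.integral_const]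
    simp only [sub_zero, smul_eq_mul]
    field_simp
    ring
  · apply Continuous.integrableOn_Ioc
    fun_prop
  · filter_upwards [ae_restrict_mem measurableSet_Ioc] with x hx
    have : v / u * x ≤ v := by
      rw [div_mul_eq_mul_div, div_le_iff₀ hu]
      exact mul_le_mul_of_nonneg_left hx.2 hv
    simp only [Pi.zero_apply]
    linarith

lemma Cr_nonneg (E : List (ℕ × ℕ)) : ∀ z ∈ Cr E, 0 ≤ z.1 ∧ 0 ≤ z.2 := by
  induction E with
  | nil => simp [Cr]
  | cons f F ihF =>
    intro y hy
    rcases hy with hy | hy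
    · exact ⟨hy.1, hy.2.2.1⟩
    · have h8 := ihF _ hy
      simp only [Prod.fst_add, Prod.snd_add, add_zero] at h8
      have : (0 : ℝ) ≤ f.1 := by positivity
      exact ⟨by linarith, h8.2⟩

lemma Cr_vol (E : List (ℕ × ℕ)) (hp : ∀ e ∈ E, Pp e) :
    0 ≤ ar E ∧ MeasurableSet (Cr E) ∧ volume (Cr E) = ENNReal.ofReal (ar E) := by
  induction E with
  | nil => simp [Cr, ar]
  | cons e E ih =>
    obtain ⟨ih0, ih1, ih2⟩ := ih (fun f hf => hp f (List.mem_cons_of_mem _ hf))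
    have hu : (0 : ℝ) < e.1 := by exact_mod_cast (hp e List.mem_cons_self).1
    have hv : (0 : ℝ) ≤ e.2 := by positivity
    have hs : (0 : ℝ) ≤ E.sum.2 := by positivity
    have hm : MeasurableSet ((fun z : ℝ × ℝ => z + (-(e.1 : ℝ), 0)) ⁻¹' Cr E) :=
      (measurable_add_const _) ih1
    have hnn : (0 : ℝ) ≤ e.1 * (e.2 + E.sum.2) - e.2 * e.1 / 2 := by nlinarith [mul_nonneg hu.le hv, mul_nonneg hu.le hs]
    refine ⟨by rw [ar]; linarith, (Trap_meas _ _ _).union hm, ?_⟩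
    rw [Cr, measure_union _ hm, Trap_vol _ _ _ hu hv (by linarith), measure_preimage_add_right,
      ih2, ar, ENNReal.ofReal_add hnn ih0]
    rw [Set.disjoint_left]
    intro z hz hz'
    have := (Cr_nonneg E _ hz').1
    simp only [Prod.fst_add] at this
    have := hz.2.1
    linarith

lemma Cr_axis1 (E : List (ℕ × ℕ)) (hp : ∀ e ∈ E, Pp e) : ∀ (x : ℝ), 0 ≤ x →
    ((x, (0 : ℝ)) ∈ Cr E ↔ x < E.sum.1) := by
  induction E with
  | nil => intro x hx; simpa [Cr] using hx
  | cons e E ih =>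
    intro x hx
    have hu : (0 : ℝ) < e.1 := by exact_mod_cast (hp e List.mem_cons_self).1
    have hv : (0 : ℝ) < e.2 := by exact_mod_cast (hp e List.mem_cons_self).2
    have hs : (0 : ℝ) ≤ E.sum.2 := by positivity
    have hs1 : (0 : ℝ) ≤ E.sum.1 := by positivity
    simp only [List.sum_cons, Prod.fst_add, Nat.cast_add]
    by_cases h : x < e.1
    · refine iff_of_true (Or.inl ⟨hx, h, le_rfl, ?_⟩) (by linarith)
      have : (e.2 : ℝ) / e.1 * x < e.2 := by
        rw [div_mul_eq_mul_div, div_lt_iff₀ hu]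
        exact mul_lt_mul_of_pos_left h hv
      simp only
      linarith
    · have h7 := ih (fun f hf => hp f (List.mem_cons_of_mem _ hf)) (x - e.1) (by linarith)
      have h8 : (x, (0 : ℝ)) ∈ Cr (e :: E) ↔ (x - e.1, (0 : ℝ)) ∈ Cr E := by
        rw [Cr, Set.mem_union]
        have : (x, (0 : ℝ)) ∉ Trap e.1 e.2 (e.2 + E.sum.2) := fun h9 => h h9.2.1
        simp [this, sub_eq_add_neg]
      rw [h8, h7, sub_lt_iff_lt_add']

lemma Cr_axis2 (E : List (ℕ × ℕ)) (hp : ∀ e ∈ E, Pp e) (y : ℝ) (hy : 0 ≤ y) :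
    (((0 : ℝ), y) ∈ Cr E ↔ y < E.sum.2) := by
  cases E with
  | nil => simpa [Cr] using hy
  | cons e E =>
    have hu : (0 : ℝ) < e.1 := by exact_mod_cast (hp e List.mem_cons_self).1
    simp only [List.sum_cons, Prod.snd_add, Nat.cast_add]
    constructor
    · rintro (h | h)
      · have := h.2.2.2
        simpa using this
      · have := (Cr_nonneg E _ h).1
        simp only [Prod.fst_add] at this
        linarith
    · intro h
      exact Or.inl ⟨le_rfl, hu, hy, by simpa using h⟩

lemma sum_dt_first (e : ℕ × ℕ) (E : List (ℕ × ℕ)) (h : ∀ f ∈ E, e.1 * f.2 ≤ e.2 * f.1) :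
    (E.map (dt e)).sum = (e.2 : ℤ) * E.sum.1 - e.1 * E.sum.2 := by
  induction E with
  | nil => simp
  | cons f E ih =>
    have h1 : (e.1 : ℤ) * f.2 ≤ e.2 * f.1 := by exact_mod_cast h f List.mem_cons_self
    simp only [List.map_cons, List.sum_cons, ih (fun g hg => h g (List.mem_cons_of_mem _ hg)), dt,
      Prod.fst_add, Prod.snd_add]
    rw [abs_of_nonpos (by linarith)]
    push_cast
    ring

lemma ar_df (E : List (ℕ × ℕ)) (hs : Sorted' E) :
    2 * ar E = (E.sum.1 : ℝ) * E.sum.2 - (df E : ℤ) := by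
  induction E with
  | nil => simp [ar, df]
  | cons e E ih =>
    obtain ⟨hs1, hs2⟩ := List.pairwise_cons.1 hs
    have := ih hs2
    rw [ar, df, sum_dt_first e E hs1]
    simp only [List.sum_cons, Prod.fst_add, Prod.snd_add]
    push_cast
    linarith

lemma df_perm {E F : List (ℕ × ℕ)} (h : E.Perm F) : df E = df F := by
  induction h with
  | nil => rfl
  | cons x h ih => rw [df, df, ih, (h.map _).sum_eq]
  | swap x y l =>
    simp only [df, List.map_cons, List.sum_cons]
    have : dt x y = dt y x := by
      rw [dt, dt, abs_sub_comm]
      congr 1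
      ring
    rw [this]; ring
  | trans _ _ h1 h2 => exact h1.trans h2

lemma exists_sorted (E : List (ℕ × ℕ)) (hp : ∀ e ∈ E, Pp e) :
    ∃ F : List (ℕ × ℕ), F.Perm E ∧ Sorted' F := by
  let le : ℕ × ℕ → ℕ × ℕ → Prop := fun e f => (f.2 : ℚ) / f.1 ≤ (e.2 : ℚ) / e.1
  haveI : Std.Total le := ⟨fun a b => le_total _ _⟩
  haveI : IsTrans _ le := ⟨fun a b c h1 h2 => le_trans h2 h1⟩
  haveI : DecidableRel le := fun a b => inferInstanceAs (Decidable (_ ≤ _))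
  refine ⟨E.insertionSort le, List.perm_insertionSort le E, ?_⟩
  have h := List.pairwise_insertionSort le E
  refine List.Pairwise.imp_of_mem ?_ h
  intro e f he hf hle
  have he' := hp e ((List.perm_insertionSort le E).mem_iff.1 he)
  have hf' := hp f ((List.perm_insertionSort le E).mem_iff.1 hf)
  have h1 : (0 : ℚ) < e.1 := by exact_mod_cast he'.1
  have h2 : (0 : ℚ) < f.1 := by exact_mod_cast hf'.1
  have h3 : (f.2 : ℚ) / f.1 ≤ (e.2 : ℚ) / e.1 := hle
  rw [div_le_div_iff₀ h2 h1] at h3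
  have h4 : f.2 * e.1 ≤ e.2 * f.1 := by exact_mod_cast h3
  linarith

lemma newton_of_list (E : List (ℕ × ℕ)) (hs : Sorted' E) (hp : ∀ e ∈ E, Pp e)
    (S : Finset (ℕ × ℕ)) (h1 : ∀ v ∈ pts E, v ∈ S)
    (h2 : ∀ v ∈ S, ((v.1 : ℝ), (v.2 : ℝ)) ∈ Kr E) :
    newtonNumber S = ((E.sum.1 : ℝ) - 1) * (E.sum.2 - 1) - (df E : ℤ) := by
  have hsub : GammaPlus S ⊆ Kr E := by
    rintro z ⟨a, ha, b, hb, rfl⟩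
    refine Kr_up E a b ?_ hb.1 hb.2
    refine convexHull_min ?_ (Kr_convex E) ha
    rintro _ ⟨v, hv, rfl⟩
    exact h2 v hv
  have hquad : Convex ℝ {v : ℝ × ℝ | 0 ≤ v.1 ∧ 0 ≤ v.2} := by
    intro z hz w hw a b ha hb _
    obtain ⟨z1, z2⟩ := hz
    obtain ⟨w1, w2⟩ := hw
    constructor
    · simp; positivity
    · simp; positivity
  have hmem : ∀ z : ℝ × ℝ, 0 ≤ z.1 → 0 ≤ z.2 → z ∉ Cr E → z ∈ GammaPlus S := by
    apply mem_of_not_Cr E hp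
    · exact (convex_convexHull ℝ _).add hquad
    · rintro z w ⟨a, ha, b, hb, rfl⟩ hw1 hw2
      refine ⟨a, ha, b + w, ⟨add_nonneg hb.1 hw1, add_nonneg hb.2 hw2⟩, ?_⟩
      simp [add_assoc]
    · intro v hv
      refine ⟨_, subset_convexHull ℝ _ ⟨v, h1 v hv, rfl⟩, 0, by simp, by simp⟩
  have hiff : ∀ z : ℝ × ℝ, z ∈ GammaPlus S ↔ 0 ≤ z.1 ∧ 0 ≤ z.2 ∧ z ∉ Cr E := by
    intro z
    constructor
    · intro h
      have hK := hsub h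
      exact ⟨hK.1, hK.2.1, Kr_not_Cr E hs hp z hK⟩
    · rintro ⟨a, b, c⟩
      exact hmem z a b c
  have hA : axisA S = E.sum.1 := by
    have : {x : ℝ | (x, (0 : ℝ)) ∈ GammaPlus S} = Set.Ici (E.sum.1 : ℝ) := by
      ext x
      rw [Set.mem_ofPred_eq, hiff, Set.mem_Ici]
      constructor
      · rintro ⟨a, _, c⟩
        rw [Cr_axis1 E hp x a] at c
        exact not_lt.1 c
      · intro h
        have hx : 0 ≤ x := le_trans (by positivity) h
        refine ⟨hx, le_rfl, ?_⟩
        rw [Cr_axis1 E hp x hx]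
        exact not_lt.2 h
    rw [axisA, this, csInf_Ici]
  have hB : axisB S = E.sum.2 := by
    have : {y : ℝ | ((0 : ℝ), y) ∈ GammaPlus S} = Set.Ici (E.sum.2 : ℝ) := by
      ext x
      rw [Set.mem_ofPred_eq, hiff, Set.mem_Ici]
      constructor
      · rintro ⟨_, a, c⟩
        rw [Cr_axis2 E hp x a] at c
        exact not_lt.1 c
      · intro h
        have hx : 0 ≤ x := le_trans (by positivity) h
        refine ⟨le_rfl, hx, ?_⟩
        rw [Cr_axis2 E hp x hx]
        exact not_lt.2 h
    rw [axisB, this, csInf_Ici]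
  have hS : areaS S = ar E := by
    have : {v : ℝ × ℝ | 0 ≤ v.1 ∧ 0 ≤ v.2} \ GammaPlus S = Cr E := by
      ext z
      rw [Set.mem_sdiff, hiff]
      constructor
      · rintro ⟨⟨a, b⟩, c⟩
        by_contra h
        exact c ⟨a, b, h⟩
      · intro h
        exact ⟨Cr_nonneg E z h, fun h' => h'.2.2 h⟩
    obtain ⟨h3, _, h4⟩ := Cr_vol E hp
    rw [areaS, this, h4, ENNReal.toReal_ofReal h3]
  rw [newtonNumber, hA, hB, hS, ar_df E hs]
  ring

lemma attainable_of_R (p q : ℕ) (n : ℤ) (h : R p q n) : Attainable {(p, 0), (0, q)} n := by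
  obtain ⟨U, V, d, hU, hV, ⟨E', hp', hsum', hdf'⟩, hn⟩ := h
  obtain ⟨E, hperm, hs⟩ := exists_sorted E' hp'
  have hp : ∀ e ∈ E, Pp e := fun e he => hp' e (hperm.mem_iff.1 he)
  have hsum : E.sum = (U, V) := by rw [hperm.sum_eq, hsum']
  have hdf : df E = d := by rw [df_perm hperm, hdf']
  refine ⟨(pts E).toFinset, ?_⟩
  rw [newton_of_list E hs hp]
  · rw [hsum, hdf, hn]; push_cast; ring
  · intro v hv
    simp [hv]
  · intro v hv
    simp only [Finset.mem_union, Finset.mem_insert, Finset.mem_singleton, List.mem_toFinset] at hv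
    rcases hv with (rfl | rfl) | hv
    · refine ⟨by positivity, by simp, fun e _ => ?_⟩
      have h1 := supp_le_fst E e.2 e.1
      rw [hsum] at h1
      have h2 : (e.2 : ℝ) * U ≤ e.2 * p := by gcongr
      simp only [Nat.cast_zero, mul_zero, add_zero]
      linarith
    · refine ⟨by simp, by positivity, fun e _ => ?_⟩
      have h1 := supp_le_snd E e.2 e.1
      rw [hsum] at h1
      have h2 : (e.1 : ℝ) * V ≤ e.1 * q := by gcongr
      simp only [Nat.cast_zero, mul_zero, zero_add]
      linarith
    · exact pts_mem_Kr E v hv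

/-- possible Milnor numbers of deformations of a SQH singularity
with weights `(1/p, 1/q)`, `4 < p < q`, `p ∤ q`. -/
theorem stmt_0 (p q k r m : ℕ) (ν ν' : ℤ)
    (hp : 4 < p) (hpq : p < q) (hnd : ¬ p ∣ q)
    (hk : 1 ≤ k) (hr0 : 0 < r) (hrp : r < p) (hq : q = k * p + r)
    (hm : m = Nat.gcd p q)
    (hν : ν = ((p : ℤ) - 1) * ((q : ℤ) - 1))
    (hν' : ν' = ((p : ℤ) - 1) * ((k : ℤ) * p - 1))
    (n : ℤ) (hn1 : 1 ≤ n) (hn2 : n ≤ ν)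
    (e1 : ¬ (ν - m < n ∧ n < ν))
    (e2 : ¬ (ν' - ((p : ℤ) - 1) < n ∧ n < ν'))
    (e3 : ¬ (Even p ∧ r = p - 1 ∧ n = ν - p))
    (e4 : ¬ (Even p ∧ n = ν' - (2 * (p : ℤ) - 1))) :
    Attainable {(p, 0), (0, q)} n := by
  exact attainable_of_R p q n
    (R_main p q k r m ν ν' hp hk hr0 hrp hq hm hν hν' n hn1 hn2 e1 e2 e3 e4)
end

section
/- Let p ≥ 2 and k ≥ 1 be integers and set ν = (p−1)(kp−1). Then every integer n with 1 ≤ n ≤ ν is attainable from T = {(p,0),(0,kp)}, with the possible exception of: integers n with ν − (p−1) < n < ν, and the integer n = ν − (2p−1) in case p is even. -/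
open Pointwise MeasureTheory

lemma gp_low (T : Finset (ℕ × ℕ)) (α β c : ℝ) (hα : 0 ≤ α) (hβ : 0 ≤ β)
    (h : ∀ v ∈ T, c ≤ α * v.1 + β * v.2) (z : ℝ × ℝ) (hz : z ∈ GammaPlus T) :
    c ≤ α * z.1 + β * z.2 := by
  obtain ⟨u, hu, w, hw, rfl⟩ := Set.mem_add.1 hz
  have hconv : Convex ℝ {z : ℝ × ℝ | c ≤ α * z.1 + β * z.2} := by
    intro a ha b hb s t hs ht hst
    simp only [Set.mem_ofPred_eq, Prod.fst_add, Prod.snd_add, Prod.smul_fst, Prod.smul_snd,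
      smul_eq_mul] at *
    have h1 := mul_le_mul_of_nonneg_left ha hs
    have h2 := mul_le_mul_of_nonneg_left hb ht
    have h3 : c = s * c + t * c := by rw [← add_mul, hst, one_mul]
    nlinarith
  have h1 : u ∈ {z : ℝ × ℝ | c ≤ α * z.1 + β * z.2} := by
    refine convexHull_min ?_ hconv hu
    rintro _ ⟨v, hv, rfl⟩
    exact h v hv
  simp only [Set.mem_ofPred_eq] at h1 hw
  simp only [Prod.fst_add, Prod.snd_add]
  nlinarith [mul_nonneg hα hw.1, mul_nonneg hβ hw.2]

lemma gp_mem (T : Finset (ℕ × ℕ)) (v : ℕ × ℕ) (hv : v ∈ T) (x y : ℝ) (hx : (v.1 : ℝ) ≤ x)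
    (hy : (v.2 : ℝ) ≤ y) : (x, y) ∈ GammaPlus T := by
  refine Set.mem_add.2 ⟨((v.1 : ℝ), (v.2 : ℝ)), subset_convexHull ℝ _ ⟨v, hv, rfl⟩,
    (x - v.1, y - v.2), ?_, ?_⟩
  · simp only [Set.mem_ofPred_eq]; constructor <;> linarith
  · simp

lemma gp_seg (T : Finset (ℕ × ℕ)) (v w : ℕ × ℕ) (hv : v ∈ T) (hw : w ∈ T) (x y : ℝ)
    (hlt : (v.1 : ℝ) < w.1) (h1 : (v.1 : ℝ) ≤ x) (h2 : x ≤ w.1)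
    (h : ((w.2 : ℝ) - v.2) * (x - v.1) ≤ (y - v.2) * (w.1 - v.1)) : (x, y) ∈ GammaPlus T := by
  have hd : (0 : ℝ) < w.1 - v.1 := by linarith
  set t : ℝ := (x - v.1) / (w.1 - v.1) with ht
  have ht0 : 0 ≤ t := div_nonneg (by linarith) hd.le
  have ht1 : t ≤ 1 := by rw [ht, div_le_one hd]; linarith
  have htm : t * (w.1 - v.1) = x - v.1 := by rw [ht]; field_simp
  refine Set.mem_add.2 ⟨(1 - t) • ((v.1 : ℝ), (v.2 : ℝ)) + t • ((w.1 : ℝ), (w.2 : ℝ)), ?_,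
    (0, y - ((1 - t) * v.2 + t * w.2)), ?_, ?_⟩
  · exact (convex_convexHull ℝ _) (subset_convexHull ℝ _ (Set.mem_image_of_mem
      (fun v : ℕ × ℕ => ((v.1 : ℝ), (v.2 : ℝ))) hv)) (subset_convexHull ℝ _ (Set.mem_image_of_mem
      (fun v : ℕ × ℕ => ((v.1 : ℝ), (v.2 : ℝ))) hw)) (by linarith) ht0 (by ring)
  · simp only [Set.mem_ofPred_eq]
    refine ⟨le_refl _, ?_⟩
    rw [← htm] at h
    have : ((w.2 : ℝ) - v.2) * t ≤ y - v.2 := by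
      refine le_of_mul_le_mul_right ?_ hd
      linarith
    linarith
  · ext
    · simp; linarith
    · simp

lemma gp_eq (T T' : Finset (ℕ × ℕ)) (hT : T ⊆ T')
    (h : ∀ v ∈ T', ((v.1 : ℝ), (v.2 : ℝ)) ∈ GammaPlus T) : GammaPlus T' = GammaPlus T := by
  have hq : Convex ℝ {v : ℝ × ℝ | 0 ≤ v.1 ∧ 0 ≤ v.2} := by
    intro a ha b hb s t hs ht hst
    simp only [Set.mem_ofPred_eq, Prod.fst_add, Prod.snd_add, Prod.smul_fst, Prod.smul_snd,
      smul_eq_mul] at *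
    have := mul_nonneg hs ha.1
    have := mul_nonneg hs ha.2
    have := mul_nonneg ht hb.1
    have := mul_nonneg ht hb.2
    constructor <;> linarith
  apply Set.Subset.antisymm
  · intro z hz
    obtain ⟨u, hu, w, hw, rfl⟩ := Set.mem_add.1 hz
    have hu' : u ∈ GammaPlus T := by
      refine convexHull_min ?_ ((convex_convexHull ℝ _).add hq) hu
      rintro _ ⟨v, hv, rfl⟩
      exact h v hv
    obtain ⟨u1, hu1, w1, hw1, rfl⟩ := Set.mem_add.1 hu'
    refine Set.mem_add.2 ⟨u1, hu1, w1 + w, ?_, by rw [add_assoc]⟩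
    simp only [Set.mem_ofPred_eq, Prod.fst_add, Prod.snd_add] at *
    exact ⟨add_nonneg hw1.1 hw.1, add_nonneg hw1.2 hw.2⟩
  · refine Set.add_subset_add_right (convexHull_mono ?_)
    exact Set.image_mono (by exact_mod_cast hT)

lemma nn_congr (T T' : Finset (ℕ × ℕ)) (h : GammaPlus T = GammaPlus T') :
    newtonNumber T = newtonNumber T' := by
  unfold newtonNumber areaS axisA axisB
  rw [h]

lemma att_of (T Q : Finset (ℕ × ℕ)) (n : ℤ) (hn : (n : ℝ) = newtonNumber Q)
    (h : ∀ v ∈ T, ((v.1 : ℝ), (v.2 : ℝ)) ∈ GammaPlus Q) : Attainable T n := by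
  refine ⟨Q, ?_⟩
  rw [hn]
  refine nn_congr _ _ (gp_eq _ _ Finset.subset_union_right ?_).symm
  intro v hv
  rcases Finset.mem_union.1 hv with hv | hv
  · exact h v hv
  · exact gp_mem _ v hv _ _ le_rfl le_rfl

lemma att_mono (T T' : Finset (ℕ × ℕ)) (n : ℤ) (ha : Attainable T n)
    (h : ∀ v ∈ T', ∃ w ∈ T, w.1 ≤ v.1 ∧ w.2 ≤ v.2) : Attainable T' n := by
  obtain ⟨P, hP⟩ := ha
  refine att_of T' (T ∪ P) n hP ?_
  intro v hv
  obtain ⟨w, hw, h1, h2⟩ := h v hv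
  exact gp_mem _ w (Finset.mem_union_left _ hw) _ _ (by exact_mod_cast h1) (by exact_mod_cast h2)

/-- region below a segment -/
def piece (u v s t : ℝ) : Set (ℝ × ℝ) :=
  {z | (u ≤ z.1 ∧ z.1 < v) ∧ 0 ≤ z.2 ∧ (z.2 - s) * (v - u) < (t - s) * (z.1 - u)}

lemma piece_meas (u v s t : ℝ) : MeasurableSet (piece u v s t) := by
  unfold piece
  have h1 : MeasurableSet {z : ℝ × ℝ | u ≤ z.1} := measurableSet_le (by fun_prop) (by fun_prop)
  have h2 : MeasurableSet {z : ℝ × ℝ | z.1 < v} := measurableSet_lt (by fun_prop) (by fun_prop)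
  have h3 : MeasurableSet {z : ℝ × ℝ | 0 ≤ z.2} := measurableSet_le (by fun_prop) (by fun_prop)
  have h4 : MeasurableSet {z : ℝ × ℝ | (z.2 - s) * (v - u) < (t - s) * (z.1 - u)} :=
    measurableSet_lt (by fun_prop) (by fun_prop)
  exact (h1.inter h2).inter (h3.inter h4)

lemma piece_vol (u v s t : ℝ) (huv : u ≤ v) (hs : 0 ≤ s) (ht : 0 ≤ t) :
    volume (piece u v s t) = ENNReal.ofReal ((v - u) * (s + t) / 2) := by
  rcases huv.eq_or_lt with rfl | huv
  · have : piece u u s t = ∅ := by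
      ext z
      simp only [piece, Set.mem_ofPred_eq, Set.mem_empty_iff_false, iff_false]
      rintro ⟨⟨h1, h2⟩, -⟩
      linarith
    rw [this]; simp
  have hd : 0 < v - u := by linarith
  set m := (t - s) / (v - u) with hm
  have hmm : m * (v - u) = t - s := by rw [hm]; field_simp
  have hsec : ∀ x, volume (Prod.mk x ⁻¹' piece u v s t) =
      (Set.Ico u v).indicator (fun x => ENNReal.ofReal (s + m * (x - u))) x := by
    intro x
    by_cases hx : x ∈ Set.Ico u v
    · rw [Set.indicator_of_mem hx]
      have : Prod.mk x ⁻¹' piece u v s t = Set.Ico 0 (s + m * (x - u)) := by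
        ext y
        simp only [piece, Set.mem_preimage, Set.mem_ofPred_eq, Set.mem_Ico]
        rw [← hmm]
        constructor
        · rintro ⟨-, h1, h2⟩
          refine ⟨h1, ?_⟩
          have : y - s < m * (x - u) := by
            refine lt_of_mul_lt_mul_right ?_ hd.le
            linarith
          linarith
        · rintro ⟨h1, h2⟩
          refine ⟨hx, h1, ?_⟩
          nlinarith
      rw [this, Real.volume_Ico, sub_zero]
    · rw [Set.indicator_of_notMem hx]
      have : Prod.mk x ⁻¹' piece u v s t = ∅ := by
        ext y
        simp only [piece, Set.mem_preimage, Set.mem_ofPred_eq, Set.mem_empty_iff_false, iff_false]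
        rintro ⟨h, -⟩
        exact hx h
      rw [this]; simp
  rw [Measure.volume_eq_prod, Measure.prod_apply (piece_meas u v s t)]
  simp_rw [hsec]
  rw [lintegral_indicator measurableSet_Ico, ← ofReal_integral_eq_lintegral_ofReal]
  · congr 1
    rw [integral_Ico_eq_integral_Ioo, ← integral_Ioc_eq_integral_Ioo,
      ← intervalIntegral.integral_of_le huv.le]
    have : ∀ x ∈ Set.uIcc u v, HasDerivAt (fun x => s * x + m * (x - u) ^ 2 / 2)
        (s + m * (x - u)) x := by
      intro x _
      have h1 : HasDerivAt (fun x : ℝ => x - u) 1 x := (hasDerivAt_id x).sub_const u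
      have h2 := ((h1.pow 2).const_mul m).div_const 2
      have h3 := ((hasDerivAt_id x).const_mul s).add h2
      refine h3.congr_deriv ?_
      norm_num
      ring
    rw [intervalIntegral.integral_eq_sub_of_hasDerivAt this
      (Continuous.intervalIntegrable (by fun_prop) _ _)]
    have : m * (v - u) ^ 2 = (t - s) * (v - u) := by rw [← hmm]; ring
    rw [this]; ring
  · exact (Continuous.integrableOn_Icc (by fun_prop)).mono_set Set.Ico_subset_Icc_self
  · refine (ae_restrict_iff' measurableSet_Ico).2 (ae_of_all _ ?_)
    intro x hx
    have h1 : 0 ≤ x - u := by linarith [hx.1]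
    have h2 : 0 ≤ v - x := by linarith [hx.2]
    have : 0 ≤ (s + m * (x - u)) * (v - u) := by
      have : (s + m * (x - u)) * (v - u) = s * (v - x) + t * (x - u) := by
        linear_combination (x - u) * hmm
      rw [this]; positivity
    exact nonneg_of_mul_nonneg_left this hd


lemma chain_nn (T : Finset (ℕ × ℕ)) (b x1 y1 x2 y2 a : ℕ)
    (m0 : (0, b) ∈ T) (m1 : (x1, y1) ∈ T) (m2 : (x2, y2) ∈ T) (m3 : (a, 0) ∈ T)
    (hx : x1 ≤ x2) (hxa : x2 < a) (hy1 : y1 ≤ b) (hy2 : y2 ≤ y1) (hy0 : 0 < y2)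
    (hB : 0 < x1 ∨ (x2 = 0 ∧ y2 = b))
    (h1 : ∀ v ∈ T, ((y1 : ℝ) - b) * (v.1 - 0) ≤ (v.2 - b) * (x1 - 0))
    (h2 : ∀ v ∈ T, ((y2 : ℝ) - y1) * (v.1 - x1) ≤ (v.2 - y1) * (x2 - x1))
    (h3 : ∀ v ∈ T, (0 - (y2 : ℝ)) * (v.1 - x2) ≤ (v.2 - y2) * (a - x2)) :
    newtonNumber T = x1 * (b + y1) + (x2 - x1) * (y1 + y2) + (a - x2) * y2 - a - b + 1 := by
  have hx' : (x1 : ℝ) ≤ x2 := by exact_mod_cast hx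
  have hxa' : (x2 : ℝ) < a := by exact_mod_cast hxa
  have hy1' : (y1 : ℝ) ≤ b := by exact_mod_cast hy1
  have hy2' : (y2 : ℝ) ≤ y1 := by exact_mod_cast hy2
  have hy0' : (0 : ℝ) < y2 := by exact_mod_cast hy0
  have hx0' : (0 : ℝ) ≤ x1 := by positivity
  -- edge inequalities on the whole polyhedron
  have g1 : ∀ z ∈ GammaPlus T, ((y1 : ℝ) - b) * (z.1 - 0) ≤ (z.2 - b) * (x1 - 0) := by
    intro z hz
    have := gp_low T (b - y1) (x1) (b * x1) (by linarith) (by linarith)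
      (fun v hv => by linarith [h1 v hv]) z hz
    linarith
  have g2 : ∀ z ∈ GammaPlus T, ((y2 : ℝ) - y1) * (z.1 - x1) ≤ (z.2 - y1) * (x2 - x1) := by
    intro z hz
    have := gp_low T (y1 - y2) (x2 - x1) (y1 * (x2 - x1) + (y1 - y2) * x1) (by linarith)
      (by linarith) (fun v hv => by linarith [h2 v hv]) z hz
    linarith
  have g3 : ∀ z ∈ GammaPlus T, (0 - (y2 : ℝ)) * (z.1 - x2) ≤ (z.2 - y2) * (a - x2) := by
    intro z hz
    have := gp_low T y2 (a - x2) (y2 * (a - x2) + y2 * x2) (by linarith)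
      (by linarith) (fun v hv => by linarith [h3 v hv]) z hz
    linarith
  have hA : axisA T = a := by
    unfold axisA
    refine IsLeast.csInf_eq ⟨?_, ?_⟩
    · exact gp_mem T (a, 0) m3 _ _ le_rfl (by simp)
    · intro x hx
      have := g3 _ hx
      simp only at this
      have h4 : (y2 : ℝ) * a ≤ y2 * x := by linarith
      exact le_of_mul_le_mul_left h4 hy0'
  have hBB : axisB T = b := by
    unfold axisB
    refine IsLeast.csInf_eq ⟨?_, ?_⟩
    · exact gp_mem T (0, b) m0 _ _ (by simp) le_rfl
    · intro y hy
      rcases hB with hB | ⟨e1, e2⟩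
      · have hB' : (0 : ℝ) < x1 := by exact_mod_cast hB
        have := g1 _ hy
        simp only at this
        have h4 : (b : ℝ) * x1 ≤ y * x1 := by linarith
        exact le_of_mul_le_mul_right h4 hB'
      · have := g3 _ hy
        subst e1 e2
        simp only [Nat.cast_zero] at this hxa'
        have h4 : (y2 : ℝ) * a ≤ y * a := by linarith
        exact le_of_mul_le_mul_right h4 hxa'
  have hreg : ({v : ℝ × ℝ | 0 ≤ v.1 ∧ 0 ≤ v.2} \ GammaPlus T) =
      (piece 0 x1 b y1 ∪ piece x1 x2 y1 y2) ∪ piece x2 a y2 0 := by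
    ext ⟨x, y⟩
    simp only [Set.mem_sdiff, Set.mem_union, piece, Set.mem_ofPred_eq]
    constructor
    · rintro ⟨⟨hx0, hy⟩, hn⟩
      rcases lt_or_ge x x1 with c1 | c1
      · left; left
        refine ⟨⟨hx0, c1⟩, hy, ?_⟩
        by_contra hcon
        push Not at hcon
        refine hn (gp_seg T (0, b) (x1, y1) m0 m1 x y ?_ ?_ ?_ ?_)
        · push_cast; linarith
        · push_cast; linarith
        · exact c1.le
        · push_cast; linarith
      rcases lt_or_ge x x2 with c2 | c2
      · left; right
        refine ⟨⟨c1, c2⟩, hy, ?_⟩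
        by_contra hcon
        push Not at hcon
        exact hn (gp_seg T (x1, y1) (x2, y2) m1 m2 x y (lt_of_le_of_lt c1 c2) c1 c2.le hcon)
      rcases lt_or_ge x a with c3 | c3
      · right
        refine ⟨⟨c2, c3⟩, hy, ?_⟩
        by_contra hcon
        push Not at hcon
        refine hn (gp_seg T (x2, y2) (a, 0) m2 m3 x y (lt_of_le_of_lt c2 c3) c2 c3.le ?_)
        push_cast; linarith
      · exact absurd (gp_mem T (a, 0) m3 x y c3 (by push_cast; exact hy)) hn
    · rintro ((⟨⟨c1, c2⟩, c3, c4⟩ | ⟨⟨c1, c2⟩, c3, c4⟩) | ⟨⟨c1, c2⟩, c3, c4⟩)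
      · exact ⟨⟨by linarith, c3⟩, fun hz => absurd (g1 _ hz) (not_le.2 c4)⟩
      · exact ⟨⟨by linarith, c3⟩, fun hz => absurd (g2 _ hz) (not_le.2 c4)⟩
      · exact ⟨⟨by linarith, c3⟩, fun hz => absurd (g3 _ hz) (not_le.2 c4)⟩
  have hS : areaS T = x1 * (b + y1) / 2 + (x2 - x1) * (y1 + y2) / 2 + (a - x2) * y2 / 2 := by
    unfold areaS
    rw [hreg, measure_union _ (piece_meas _ _ _ _), measure_union _ (piece_meas _ _ _ _),
      piece_vol _ _ _ _ hx0' (by linarith) (by linarith),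
      piece_vol _ _ _ _ hx' (by linarith) (by linarith),
      piece_vol _ _ _ _ hxa'.le (by linarith) (by linarith)]
    · have p1 : 0 ≤ ((x1 : ℝ) - 0) * (b + y1) / 2 := by
        have := mul_nonneg hx0' (by linarith : (0 : ℝ) ≤ b + y1)
        linarith
      have p2 : 0 ≤ ((x2 : ℝ) - x1) * (y1 + y2) / 2 := by
        have := mul_nonneg (by linarith : (0 : ℝ) ≤ x2 - x1) (by linarith : (0 : ℝ) ≤ y1 + y2)
        linarith
      have p3 : 0 ≤ ((a : ℝ) - x2) * (y2 + 0) / 2 := by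
        have := mul_nonneg (by linarith : (0 : ℝ) ≤ a - x2) (by linarith : (0 : ℝ) ≤ y2 + 0)
        linarith
      rw [← ENNReal.ofReal_add p1 p2, ← ENNReal.ofReal_add (by linarith) p3,
        ENNReal.toReal_ofReal (by linarith)]
      ring
    · rw [Set.disjoint_left]
      rintro z ⟨⟨c1, c2⟩, -⟩ ⟨⟨c3, c4⟩, -⟩
      linarith
    · rw [Set.disjoint_left]
      rintro z (⟨⟨c1, c2⟩, -⟩ | ⟨⟨c1, c2⟩, -⟩) ⟨⟨c3, c4⟩, -⟩ <;> linarith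
  unfold newtonNumber
  rw [hA, hBB, hS]
  ring

lemma att4 (p k : ℕ) (n b x1 y1 x2 y2 a : ℤ) (hap : a ≤ p) (hbk : b ≤ k * p)
    (hx0 : 0 ≤ x1) (hx : x1 ≤ x2) (hxa : x2 < a) (hy1 : y1 ≤ b) (hy2 : y2 ≤ y1) (hy0 : 0 < y2)
    (hB : 0 < x1 ∨ (x2 = 0 ∧ y2 = b))
    (h12 : (y1 - b) * x2 ≤ (y2 - b) * x1) (h13 : (y1 - b) * a ≤ (0 - b) * x1)
    (h20 : (y2 - y1) * (0 - x1) ≤ (b - y1) * (x2 - x1))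
    (h23 : (y2 - y1) * (a - x1) ≤ (0 - y1) * (x2 - x1))
    (h30 : (0 - y2) * (0 - x2) ≤ (b - y2) * (a - x2))
    (h31 : (0 - y2) * (x1 - x2) ≤ (y1 - y2) * (a - x2))
    (hn : n = x1 * (b + y1) + (x2 - x1) * (y1 + y2) + (a - x2) * y2 - a - b + 1) :
    Attainable {(p, 0), (0, k * p)} n := by
  lift b to ℕ using by linarith
  lift x1 to ℕ using hx0
  lift x2 to ℕ using by linarith
  lift y1 to ℕ using by linarith
  lift y2 to ℕ using by linarith
  lift a to ℕ using by linarith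
  have hap' : a ≤ p := by exact_mod_cast hap
  have hbk' : b ≤ k * p := by exact_mod_cast hbk
  have e12 : ((y1 : ℝ) - b) * x2 ≤ (y2 - b) * x1 := by exact_mod_cast h12
  have e13 : ((y1 : ℝ) - b) * a ≤ (0 - b) * x1 := by exact_mod_cast h13
  have e20 : ((y2 : ℝ) - y1) * (0 - x1) ≤ (b - y1) * (x2 - x1) := by exact_mod_cast h20
  have e23 : ((y2 : ℝ) - y1) * (a - x1) ≤ (0 - y1) * (x2 - x1) := by exact_mod_cast h23
  have e30 : (0 - (y2 : ℝ)) * (0 - x2) ≤ (b - y2) * (a - x2) := by exact_mod_cast h30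
  have e31 : (0 - (y2 : ℝ)) * (x1 - x2) ≤ (y1 - y2) * (a - x2) := by exact_mod_cast h31
  refine att_of _ {(0, b), (x1, y1), (x2, y2), (a, 0)} n ?_ ?_
  · rw [chain_nn _ b x1 y1 x2 y2 a (by simp) (by simp) (by simp) (by simp)
      (by exact_mod_cast hx) (by exact_mod_cast hxa) (by exact_mod_cast hy1)
      (by exact_mod_cast hy2) (by exact_mod_cast hy0) (by exact_mod_cast hB)]
    · rw [hn]; push_cast; ring
    · intro v hv
      simp only [Finset.mem_insert, Finset.mem_singleton] at hv
      rcases hv with rfl | rfl | rfl | rfl <;> push_cast <;> linarith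
    · intro v hv
      simp only [Finset.mem_insert, Finset.mem_singleton] at hv
      rcases hv with rfl | rfl | rfl | rfl <;> push_cast <;> linarith
    · intro v hv
      simp only [Finset.mem_insert, Finset.mem_singleton] at hv
      rcases hv with rfl | rfl | rfl | rfl <;> push_cast <;> linarith
  · intro v hv
    simp only [Finset.mem_insert, Finset.mem_singleton] at hv
    rcases hv with rfl | rfl
    · exact gp_mem _ (a, 0) (by simp) _ _ (by exact_mod_cast hap') le_rfl
    · exact gp_mem _ (0, b) (by simp) _ _ le_rfl (by exact_mod_cast hbk')

lemma att3 (p k : ℕ) (n b x y a : ℤ) (hap : a ≤ p) (hbk : b ≤ k * p)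
    (hx0 : 0 < x) (hxa : x < a) (hy0 : 0 < y) (h : x * b + y * a ≤ a * b)
    (hn : n = (x - 1) * b + (y - 1) * a + 1) :
    Attainable {(p, 0), (0, k * p)} n := by
  have hyb : y ≤ b := by
    have h1 : 0 ≤ (b - y) * a := by
      have : 0 < b := by nlinarith
      nlinarith
    nlinarith
  exact att4 p k n b x y x y a hap hbk hx0.le le_rfl hxa hyb le_rfl hy0 (Or.inl hx0)
    le_rfl (by linarith) (by linarith) (by linarith) (by linarith) (by linarith)
    (by rw [hn]; ring)

lemma att2 (p k : ℕ) (n b a : ℤ) (hap : a ≤ p) (hbk : b ≤ k * p)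
    (ha : 0 < a) (hb : 0 < b) (hn : n = (a - 1) * (b - 1)) :
    Attainable {(p, 0), (0, k * p)} n := by
  exact att4 p k n b 0 b 0 b a hap hbk le_rfl le_rfl ha le_rfl le_rfl hb (Or.inr ⟨rfl, rfl⟩)
    (by simp) (by simp) (by simp) (by simp) (by simp) (by simp)
    (by rw [hn]; ring)


set_option maxHeartbeats 4000000 in
lemma step_att (p k : ℕ) (hp : 3 ≤ p) (hk : 1 ≤ k) (n d : ℤ)
    (hn : n = ((p : ℤ) - 1) * ((k : ℤ) * p - 1) - d) (hnk : (k : ℤ) * p ≤ n)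
    (hd0 : 0 ≤ d) (hd : d = 0 ∨ (p : ℤ) - 1 ≤ d) (hev : ¬ (Even p ∧ d = 2 * (p : ℤ) - 1))
    (hcase : d < 2 * k * ((p : ℤ) - 1) - 1 ∨
      (2 * k * ((p : ℤ) - 1) - 1 < d ∧ d < 2 * k * ((p : ℤ) - 1) - 1 + p - 2) ∨
      (Odd p ∧ d = 2 * k * ((p : ℤ) - 1) - 1 + 2 * p - 3)) :
    Attainable {(p, 0), (0, k * p)} n := by
  have hP : (3 : ℤ) ≤ p := by exact_mod_cast hp
  have hK : (1 : ℤ) ≤ k := by exact_mod_cast hk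
  have hkp : (p : ℤ) ≤ k * p := by nlinarith
  rcases eq_or_ne d 0 with hd00 | hd00
  · exact att2 p k n (k * p) p le_rfl le_rfl (by linarith) (by linarith) (by rw [hn, hd00]; ring)
  have hdp : (p : ℤ) - 1 ≤ d := hd.resolve_left hd00
  obtain ⟨q, r, hqr, hr0, hrp⟩ : ∃ q r : ℤ, d = q * p + r ∧ 0 ≤ r ∧ r < p :=
    ⟨d / p, d % p, by rw [mul_comm]; exact (Int.mul_ediv_add_emod d p).symm,
      Int.emod_nonneg _ (by linarith), Int.emod_lt_of_pos _ (by linarith)⟩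
  have hq0 : 0 ≤ q := by
    by_contra h
    push Not at h
    nlinarith
  rcases eq_or_ne q 0 with hq | hq
  · subst hq
    have : d = p - 1 := by linarith
    exact att2 p k n (k * p - 1) p le_rfl (by linarith) (by linarith) (by linarith)
      (by rw [hn, this]; ring)
  have hq1 : 1 ≤ q := by omega
  rcases le_or_gt r q with hrq | hrq
  · -- one point with x = 2
    refine att3 p k n (k * p - r) 2 (k * p - 2 * k - q) p le_rfl (by linarith) (by norm_num)
      (by linarith) ?_ ?_ ?_
    · have h1 : -1 ≤ (p : ℤ) * (k * p - 2 * k - 1 - q) := by nlinarith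
      by_contra h
      push Not at h
      have h2 : (k * p - 2 * k - 1 - q : ℤ) ≤ -1 := by linarith
      nlinarith
    · nlinarith
    · rw [hn, hqr]; ring
  rcases lt_or_ge q (k * (p - r - 1)) with hA | hA
  · have hxr : r + 1 < p := by
      by_contra h
      push Not at h
      nlinarith
    refine att3 p k n (k * p - 1) (r + 1) (k * (p - r - 1) - q) p le_rfl (by linarith)
      (by linarith) (by linarith) (by linarith) ?_ ?_
    · nlinarith
    · rw [hn, hqr]; ring
  -- remaining cases
  obtain ⟨s, hs⟩ : ∃ s : ℤ, s = p - r - 1 := ⟨_, rfl⟩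
  have hs0 : 0 ≤ s := by linarith
  rw [← hs] at hA
  have hs1 : s ≤ 1 := by
    by_contra h
    push Not at h
    have hq2 : 2 * (k : ℤ) ≤ q := by nlinarith
    have hqp : 2 * (k : ℤ) * p ≤ q * p := by nlinarith
    rcases hcase with hc | ⟨-, hc⟩ | ⟨-, hc⟩
    · nlinarith
    · have h1 : r < p - 2 * k - 3 := by nlinarith
      have h2 : 2 * k + 2 < s := by linarith
      have h3 : 3 * (k : ℤ) ≤ q := by nlinarith
      nlinarith
    · rcases hq2.eq_or_lt with h4 | h4
      · have h5 : r = 2 * p - 4 - 2 * k := by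
          rw [← h4] at hqr
          linarith
        linarith
      · have h6 : (2 * (k : ℤ) + 1) * p ≤ q * p := by
          have : 2 * (k : ℤ) + 1 ≤ q := h4
          nlinarith
        have h7 : r ≤ p - 2 * k - 4 := by nlinarith
        have h8 : 2 * (k : ℤ) + 3 ≤ s := by linarith
        have h9 : 2 * (k : ℤ) + 2 ≤ q := by nlinarith
        nlinarith
  have hcases : s = 0 ∨ s = 1 := by omega
  rcases hcases with rfl | rfl
  · -- r = p - 1
    have hr : r = p - 1 := by linarith
    subst hr
    rcases Nat.even_or_odd p with hpe | hpo
    · have hq2 : 2 ≤ q := by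
        by_contra h
        have : q = 1 := by omega
        refine hev ⟨hpe, ?_⟩
        rw [hqr, this]; ring
      have hp4 : (4 : ℤ) ≤ p := by linarith
      have hq2k : q ≤ 2 * k - 1 := by
        by_contra h
        push Not at h
        have : 2 * (k : ℤ) * p ≤ q * p := by nlinarith
        rcases hcase with hc | ⟨-, hc⟩ | ⟨hc, -⟩
        · nlinarith
        · nlinarith
        · exact (Nat.not_even_iff_odd.2 hc) hpe
      have hk2 : (2 : ℤ) ≤ k := by omega
      by_cases hsp : (k : ℤ) = 2 ∧ q = 2
      · obtain ⟨hk', rfl⟩ := hsp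
        rcases hp4.eq_or_lt with h4 | h4
        · refine att3 p k n 7 1 4 3 (by linarith) ?_ (by norm_num) (by norm_num) (by norm_num)
            (by norm_num) ?_
          · rw [hk', ← h4]; norm_num
          · rw [hn, hqr, hk', ← h4]; norm_num
        · have h5 : (0 : ℤ) < p - 4 := by linarith
          refine att4 p k n (2 * p - 1) (p - 4) 6 (p - 2) 2 p le_rfl ?_ (by linarith)
            (by linarith) (by linarith) (by linarith) (by norm_num) (by norm_num)
            (Or.inl h5) ?_ ?_ ?_ ?_ ?_ ?_ ?_
          · rw [hk']; linarith
          · nlinarith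
          · nlinarith
          · nlinarith
          · nlinarith
          · nlinarith
          · nlinarith
          · rw [hn, hqr, hk']; ring
      · have hy2 : 0 < k * (q - 1) - q := by
          rcases hk2.eq_or_lt with h4 | h4
          · rw [← h4]
            have : q ≠ 2 := fun h => hsp ⟨h4.symm, h⟩
            omega
          · have h5 : (3 : ℤ) ≤ k := h4
            nlinarith
        obtain ⟨y2, hy2e⟩ : ∃ y2 : ℤ, y2 = k * (q - 1) - q := ⟨_, rfl⟩
        obtain ⟨m, hm⟩ : ∃ m : ℤ, m = p - q := ⟨_, rfl⟩
        have hm2 : 2 ≤ m := by omega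
        have hp' : (p : ℤ) = m + q := by linarith
        have e1 : (k : ℤ) * p - 1 = k * m + k * q - 1 := by rw [hp']; ring
        have hkm : (k : ℤ) ≤ k * m := by nlinarith
        refine att4 p k n (k * p - 1) (p - q) (k * q - q) (p - q + 1) (k * (q - 1) - q) p le_rfl
          (by linarith) (by linarith) (by linarith) (by linarith) ?_ ?_ hy2 (Or.inl (by linarith))
          ?_ ?_ ?_ ?_ ?_ ?_ ?_
        · rw [hp']; nlinarith
        · nlinarith
        · rw [hp']; nlinarith
        · rw [hp']; nlinarith
        · rw [hp']; nlinarith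
        · rw [hp']; nlinarith
        · rw [hp']; nlinarith
        · nlinarith
        · rw [hn, hqr]; ring
    · obtain ⟨m, hm⟩ := hpo
      have hm' : (p : ℤ) = 2 * m + 1 := by exact_mod_cast hm
      have hm1 : (1 : ℤ) ≤ m := by linarith
      have hy : q < k * m := by
        rcases hm1.eq_or_lt with h1 | h1
        · -- p = 3
          have hp3 : (p : ℤ) = 3 := by linarith
          have : q = 1 := by omega
          rw [this, ← h1]
          rw [hn, hqr, this, hp3] at hnk
          linarith
        have h2 : (2 : ℤ) ≤ m := h1
        have hqk : q ≤ 2 * k := by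
          by_contra h
          push Not at h
          have : (2 * (k : ℤ) + 1) * p ≤ q * p := by
            have : 2 * (k : ℤ) + 1 ≤ q := h
            nlinarith
          rcases hcase with hc | ⟨-, hc⟩ | ⟨-, hc⟩ <;> nlinarith
        rcases hqk.eq_or_lt with h3 | h3
        · rcases h2.eq_or_lt with h4 | h4
          · exfalso
            have hp5 : (p : ℤ) = 5 := by linarith
            rw [hqr, h3, hp5] at hcase
            rw [hn, hqr, h3, hp5] at hnk
            rcases hcase with hc | ⟨-, hc⟩ | ⟨-, hc⟩ <;> linarith
          · have : (3 : ℤ) ≤ m := h4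
            nlinarith
        · nlinarith
      refine att3 p k n (k * p - 2) (m + 1) (k * m - q) p le_rfl (by linarith)
        (by linarith) (by linarith) (by linarith) ?_ ?_
      · rw [hm']; nlinarith
      · rw [hn, hqr, hm']; ring
  · -- r = p - 2
    have hr : r = p - 2 := by linarith
    subst hr
    rcases hK.eq_or_lt with hk1 | hk1
    · have : q = 1 := by
        rw [hqr, ← hk1] at hcase
        rcases hcase with hc | ⟨-, hc⟩ | ⟨ho, hc⟩
        · nlinarith
        · by_contra h
          have : 2 ≤ q := by omega
          nlinarith
        · exfalso
          have h1 : (p : ℤ) * (3 - q) = 4 := by linarith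
          obtain ⟨m, hm⟩ := ho
          have hm' : (p : ℤ) = 2 * m + 1 := by exact_mod_cast hm
          have h2 : 0 < 3 - q := by
            by_contra h
            push Not at h
            nlinarith
          have h3 : 3 - q < 2 := by nlinarith
          have h4 : 3 - q = 1 := by omega
          rw [h4] at h1
          omega
      refine att2 p k n (k * p - 2) p le_rfl (by linarith) (by linarith) (by linarith) ?_
      rw [hn, hqr, this]; ring
    · have hk2 : (2 : ℤ) ≤ k := hk1
      obtain ⟨m, hm⟩ : ∃ m : ℤ, m = p - q - 1 := ⟨_, rfl⟩
      have hm2 : 2 ≤ m := by omega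
      have hp' : (p : ℤ) = m + q + 1 := by linarith
      have hkm : 2 * (k : ℤ) ≤ k * m := by nlinarith
      have hkq : 2 * q ≤ k * q := by nlinarith
      refine att4 p k n (k * p - 1) m (k * (q + 1) - q) (m + 1) (k * q - q) p le_rfl
        (by linarith) (by linarith) (by linarith) (by linarith) ?_ ?_ (by linarith)
        (Or.inl (by linarith)) ?_ ?_ ?_ ?_ ?_ ?_ ?_
      · rw [hp']; nlinarith
      · nlinarith
      · rw [hp']; nlinarith
      · rw [hp']; nlinarith
      · rw [hp']; nlinarith
      · rw [hp']; nlinarith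
      · rw [hp']; nlinarith
      · nlinarith
      · rw [hn, hqr, hp']; ring

lemma att_all (k : ℕ) (hk : 1 ≤ k) (p : ℕ) (hp : 2 ≤ p) : ∀ n : ℤ, 1 ≤ n →
    n ≤ ((p : ℤ) - 1) * ((k : ℤ) * p - 1) →
    ¬ (((p : ℤ) - 1) * ((k : ℤ) * p - 1) - ((p : ℤ) - 1) < n ∧
      n < ((p : ℤ) - 1) * ((k : ℤ) * p - 1)) →
    ¬ (Even p ∧ n = ((p : ℤ) - 1) * ((k : ℤ) * p - 1) - (2 * (p : ℤ) - 1)) →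
    Attainable {(p, 0), (0, k * p)} n := by
  induction p, hp using Nat.le_induction with
  | base =>
    intro n h1 h2 _ _
    push_cast at h2
    exact att2 2 k n (n + 1) 2 (by norm_num) (by push_cast; linarith) (by norm_num) (by linarith)
      (by ring)
  | succ p hp ih =>
    intro n h1 h2 h3 h4
    have hP : (2 : ℤ) ≤ p := by exact_mod_cast hp
    have hK : (1 : ℤ) ≤ k := by exact_mod_cast hk
    rcases lt_or_ge n (k * ((p + 1 : ℕ) : ℤ)) with hs | hs
    · exact att2 (p + 1) k n (n + 1) 2 (by push_cast; linarith) (by linarith) (by norm_num)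
        (by linarith) (by ring)
    by_cases hi : n ≤ ((p : ℤ) - 1) * ((k : ℤ) * p - 1) ∧
        ¬ (((p : ℤ) - 1) * ((k : ℤ) * p - 1) - ((p : ℤ) - 1) < n ∧
          n < ((p : ℤ) - 1) * ((k : ℤ) * p - 1)) ∧
        ¬ (Even p ∧ n = ((p : ℤ) - 1) * ((k : ℤ) * p - 1) - (2 * (p : ℤ) - 1))
    · refine att_mono _ _ n (ih n h1 hi.1 hi.2.1 hi.2.2) ?_
      intro v hv
      simp only [Finset.mem_insert, Finset.mem_singleton] at hv
      rcases hv with rfl | rfl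
      · exact ⟨(p, 0), by simp, by simp, by simp⟩
      · exact ⟨(0, k * p), by simp, by simp, by simp only; gcongr; omega⟩
    · have key : ((p : ℤ) - 1) * ((k : ℤ) * p - 1) =
          (p : ℤ) * (k * (p + 1) - 1) - (2 * k * p - 1) := by ring
      rw [key] at hi
      push_cast at h2 h3 h4
      have e0 : ((p : ℤ) + 1 - 1) = p := by ring
      rw [e0] at h2 h3 h4
      obtain ⟨N, hN⟩ : ∃ N : ℤ, N = (p : ℤ) * (k * (p + 1) - 1) := ⟨_, rfl⟩
      obtain ⟨M, hM⟩ : ∃ M : ℤ, M = 2 * (k : ℤ) * p := ⟨_, rfl⟩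
      rw [← hN, ← hM] at hi
      rw [← hN] at h2 h3 h4
      refine step_att (p + 1) k (by omega) hk n (N - n) ?_ hs (by linarith) ?_ ?_ ?_
      · push_cast; rw [e0, ← hN]; ring
      · push_cast; omega
      · push_cast
        rintro ⟨he, h5⟩
        exact h4 ⟨he, by linarith⟩
      · push_cast
        rw [e0, ← hM]
        by_cases he : Even p
        · have ho : Odd (p + 1) := he.add_one
          simp only [he, ho, true_and] at hi ⊢
          omega
        · simp only [he, false_and, not_false_eq_true, and_true] at hi
          omega

/-- possible Newton numbers of deformations of `tr(p, kp)`. -/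
theorem stmt_1 (p k : ℕ) (ν : ℤ) (hp : 2 ≤ p) (hk : 1 ≤ k)
    (hν : ν = ((p : ℤ) - 1) * ((k : ℤ) * p - 1))
    (n : ℤ) (hn1 : 1 ≤ n) (hn2 : n ≤ ν)
    (e1 : ¬ (ν - ((p : ℤ) - 1) < n ∧ n < ν))
    (e2 : ¬ (Even p ∧ n = ν - (2 * (p : ℤ) - 1))) :
    Attainable {(p, 0), (0, k * p)} n := by
  subst hν
  exact att_all k hk p hp n hn1 hn2 e1 e2
end

section
/- Let p and q be integers with 2 ≤ p ≤ q and m = gcd(p,q) < p (i.e. p does not divide q), and write q = kp + r with 0 < r < p. Set ν = (p−1)(q−1). Then ν is attainable from T = {(p,0),(0,q)}, and every integer n with ν − r(p−r) ≤ n ≤ ν − m is attainable from T. -/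
open Pointwise MeasureTheory

namespace NJ

def sX : List (ℕ × ℕ) → ℕ
  | [] => 0
  | e :: l => e.1 + sX l

def sY : List (ℕ × ℕ) → ℕ
  | [] => 0
  | e :: l => e.2 + sY l

/-- sum of the determinants over all pairs -/
def D : List (ℕ × ℕ) → ℤ
  | [] => 0
  | e :: l => ((e.1 : ℤ) * sY l - (e.2 : ℤ) * sX l) + D l

def Ach (a b : ℕ) (d : ℤ) : Prop :=
  ∃ l : List (ℕ × ℕ), (∀ e ∈ l, 0 < e.1 + e.2) ∧ sX l = a ∧ sY l = b ∧
    l.Pairwise (fun e f => e.2 * f.1 ≤ e.1 * f.2) ∧ D l = d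

lemma sX_snoc (l : List (ℕ × ℕ)) (e : ℕ × ℕ) : sX (l ++ [e]) = sX l + e.1 := by
  induction l with
  | nil => simp [sX]
  | cons f l ih => simp [sX, ih]; ring

lemma sY_snoc (l : List (ℕ × ℕ)) (e : ℕ × ℕ) : sY (l ++ [e]) = sY l + e.2 := by
  induction l with
  | nil => simp [sY]
  | cons f l ih => simp [sY, ih]; ring

lemma D_snoc (l : List (ℕ × ℕ)) (e : ℕ × ℕ) :
    D (l ++ [e]) = D l + ((sX l : ℤ) * e.2 - (sY l : ℤ) * e.1) := by
  induction l with
  | nil => simp [D, sX, sY]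
  | cons f l ih => simp [D, ih, sX, sY, sX_snoc, sY_snoc]; ring

lemma rev_aux (l : List (ℕ × ℕ)) :
    sX (l.map Prod.swap).reverse = sY l ∧ sY (l.map Prod.swap).reverse = sX l ∧
    D (l.map Prod.swap).reverse = D l := by
  induction l with
  | nil => simp [D, sX, sY]
  | cons f l ih =>
    obtain ⟨h1, h2, h3⟩ := ih
    simp only [List.map_cons, List.reverse_cons, sX_snoc, sY_snoc, D_snoc, h1, h2, h3]
    simp [sX, sY, D]
    refine ⟨by ring, by ring, by ring⟩

lemma Ach.swap {a b : ℕ} {d : ℤ} (h : Ach a b d) : Ach b a d := by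
  obtain ⟨l, h0, h1, h2, h3, h4⟩ := h
  obtain ⟨r1, r2, r3⟩ := rev_aux l
  refine ⟨(l.map Prod.swap).reverse, ?_, r1.trans h2, r2.trans h1, ?_, r3.trans h4⟩
  · intro e he
    simp only [List.mem_reverse, List.mem_map] at he
    obtain ⟨f, hf, rfl⟩ := he
    have := h0 f hf
    simp only [Prod.fst_swap, Prod.snd_swap]; omega
  · rw [List.pairwise_reverse, List.pairwise_map]
    refine h3.imp ?_
    intro e f hef
    simp only [Prod.fst_swap, Prod.snd_swap]
    linarith

lemma shear_aux (l : List (ℕ × ℕ)) :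
    sX (l.map (fun e => (e.1 + e.2, e.2))) = sX l + sY l ∧
    sY (l.map (fun e => (e.1 + e.2, e.2))) = sY l ∧
    D (l.map (fun e => (e.1 + e.2, e.2))) = D l := by
  induction l with
  | nil => simp [D, sX, sY]
  | cons f l ih =>
    obtain ⟨h1, h2, h3⟩ := ih
    simp only [List.map_cons, sX, sY, D, h1, h2, h3]
    refine ⟨by ring, trivial, by push_cast; ring⟩

lemma Ach.shear {a b : ℕ} {d : ℤ} (h : Ach a b d) : Ach (a + b) b d := by
  obtain ⟨l, h0, h1, h2, h3, h4⟩ := h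
  obtain ⟨r1, r2, r3⟩ := shear_aux l
  refine ⟨l.map (fun e => (e.1 + e.2, e.2)), ?_, by rw [r1, h1, h2], r2.trans h2, ?_,
    r3.trans h4⟩
  · intro e he
    simp only [List.mem_map] at he
    obtain ⟨f, hf, rfl⟩ := he
    have := h0 f hf
    dsimp only; omega
  · rw [List.pairwise_map]
    refine h3.imp ?_
    intro e f hef
    dsimp only
    nlinarith

lemma Ach.consOne {a b : ℕ} {d : ℤ} (h : Ach a b d) : Ach (a + 1) b (d + b) := by
  obtain ⟨l, h0, h1, h2, h3, h4⟩ := h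
  refine ⟨(1, 0) :: l, ?_, by simp [sX, h1]; ring, by simp [sY, h2], ?_, by simp [D, h2, h4]; ring⟩
  · simpa using h0
  · simpa using h3

lemma ach_zero (a b : ℕ) (h : 0 < a + b) : Ach a b 0 :=
  ⟨[(a, b)], by simpa using h, by simp [sX], by simp [sY], by simp, by simp [D, sX, sY]⟩

lemma ach_single (b y : ℕ) (h1 : 1 ≤ y) (h2 : y ≤ b) : Ach (b + 1) b ((b : ℤ) + y) := by
  -- first edge of coordinates `(b + 2 - y, b - y)`, second edge of coordinates `(y - 1, y)`
  obtain ⟨z, rfl⟩ := Nat.exists_eq_add_of_le h2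
  obtain ⟨w, rfl⟩ := Nat.exists_eq_add_of_le h1
  refine ⟨[(z + 2, z), (w, 1 + w)], by simp, by simp [sX]; ring, by simp [sY]; ring, ?_, ?_⟩
  · simp; nlinarith
  · simp [D, sX, sY]; ring

theorem ach_main (N : ℕ) : ∀ a b : ℕ, a + b = N → 0 < a → 0 < b → ∀ d : ℤ,
    (Nat.gcd a b : ℤ) ≤ d → d ≤ (a : ℤ) * b → Ach a b d := by
  induction N using Nat.strong_induction_on with
  | _ N ih =>
  have key : ∀ a b : ℕ, a + b = N → b ≤ a → 0 < b → ∀ d : ℤ,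
    (Nat.gcd a b : ℤ) ≤ d → d ≤ (a : ℤ) * b → Ach a b d := by
    intro a b hN hba hb d hd1 hd2
    obtain ⟨c, rfl⟩ := Nat.exists_eq_add_of_le hba
    rcases Nat.lt_or_ge c 2 with hc | hc
    · interval_cases c
      · -- a = b
        simp only [add_zero, Nat.gcd_self] at *
        obtain ⟨e, rfl⟩ : ∃ e, b = e + 1 := ⟨b - 1, by omega⟩
        have hz : Ach e (e + 1) (d - (e + 1 : ℕ)) := by
          by_cases hde : d = (e + 1 : ℕ)
          · rw [hde, sub_self]; exact ach_zero _ _ (by omega)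
          · have hlt : ((e + 1 : ℕ) : ℤ) < d := lt_of_le_of_ne hd1 (Ne.symm hde)
            have he : 0 < e := by
              rcases Nat.eq_zero_or_pos e with rfl | h
              · norm_num at hd2 hlt; omega
              · exact h
            refine ih _ (by omega) e (e + 1) rfl he (by omega) _ ?_ ?_
            · have : Nat.gcd e (e + 1) = 1 := by simp
              rw [this]; push_cast at *; linarith
            · push_cast at *; linarith
        have := hz.consOne
        simpa using this
      · -- a = b + 1
        rcases le_or_gt d b with h1 | h1
        · have := ih (1 + b) (by omega) 1 b rfl (by omega) hb d (by simpa using hd1)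
            (by push_cast; linarith)
          have := this.shear
          rwa [add_comm] at this
        rcases le_or_gt d (2 * b) with h2 | h2
        · obtain ⟨y, hy⟩ := Int.eq_ofNat_of_zero_le (show 0 ≤ d - b by linarith)
          have := ach_single b y (by omega) (by omega)
          rw [← hy] at this
          simpa using this
        · have := ih (b + b) (by omega) b b rfl hb hb (d - b) (by simp; linarith)
            (by push_cast at hd2; linarith)
          simpa using this.consOne
    · obtain ⟨c, rfl⟩ := Nat.exists_eq_add_of_le hc
      rcases le_or_gt d (((2 + c : ℕ) : ℤ) * b) with h1 | h1
      · have := ih (2 + c + b) (by omega) (2 + c) b rfl (by omega) hb d (by simpa using hd1) h1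
        have := this.shear
        rwa [add_comm] at this
      · have hg : (Nat.gcd (b + 1 + c) b : ℤ) ≤ b := by
          exact_mod_cast Nat.gcd_le_right _ hb
        have h3 : (0 : ℤ) ≤ (c : ℤ) * b := by positivity
        push_cast at h1 hd2
        have := ih (b + 1 + c + b) (by omega) (b + 1 + c) b rfl (by omega) hb (d - b)
          (by linarith) (by push_cast; linarith)
        have := this.consOne
        have e : b + 1 + c + 1 = b + (2 + c) := by ring
        rw [e] at this
        simpa using this
  intro a b hN ha hb d hd1 hd2
  rcases le_total b a with h | h
  · exact key a b hN h hb d hd1 hd2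
  · exact (key b a (by omega) h ha d (by rwa [Nat.gcd_comm]) (by linarith)).swap

/-! ### Geometry -/

def verts (x0 : ℕ) : List (ℕ × ℕ) → Finset (ℕ × ℕ)
  | [] => {(x0, 0)}
  | e :: l => insert (x0, e.2 + sY l) (verts (x0 + e.1) l)

noncomputable def g (x0 : ℕ) : List (ℕ × ℕ) → ℝ → ℝ
  | [] => fun _ => 0
  | e :: l => fun x =>
      max (((e.2 : ℝ) + sY l) - (e.2 : ℝ) / e.1 * (x - x0)) (g (x0 + e.1) l x)

/-- good lists: positive entries, decreasing steepness -/
def Good (l : List (ℕ × ℕ)) : Prop :=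
  (∀ e ∈ l, 0 < e.1 ∧ 0 < e.2) ∧ l.Pairwise (fun e f => (f.2 : ℝ) / f.1 ≤ (e.2 : ℝ) / e.1)

lemma Good.tail {e : ℕ × ℕ} {l : List (ℕ × ℕ)} (h : Good (e :: l)) : Good l :=
  ⟨fun f hf => h.1 f (List.mem_cons_of_mem _ hf), (List.pairwise_cons.1 h.2).2⟩

lemma g_nonneg (l : List (ℕ × ℕ)) : ∀ (x0 : ℕ) (x : ℝ), 0 ≤ g x0 l x := by
  induction l with
  | nil => intro x0 x; simp [g]
  | cons e l ih => intro x0 x; exact le_trans (ih _ x) (le_max_right _ _)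

lemma g_cont (l : List (ℕ × ℕ)) : ∀ (x0 : ℕ), Continuous (g x0 l) := by
  induction l with
  | nil => intro x0; exact continuous_const
  | cons e l ih =>
    intro x0
    have := ih (x0 + e.1)
    unfold g
    fun_prop

lemma g_anti (l : List (ℕ × ℕ)) : ∀ (x0 : ℕ), Antitone (g x0 l) := by
  induction l with
  | nil => intro x0 x y _; simp [g]
  | cons e l ih =>
    intro x0 x y hxy
    refine max_le_max ?_ (ih _ hxy)
    have : (0 : ℝ) ≤ (e.2 : ℝ) / e.1 := by positivity
    have := mul_le_mul_of_nonneg_left (sub_le_sub_right hxy (x0 : ℝ)) this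
    linarith

lemma g_convex (l : List (ℕ × ℕ)) : ∀ (x0 : ℕ), ConvexOn ℝ Set.univ (g x0 l) := by
  induction l with
  | nil => intro x0; exact convexOn_const _ convex_univ
  | cons e l ih =>
    intro x0
    refine ConvexOn.sup ?_ (ih _)
    refine ⟨convex_univ, ?_⟩
    intro x _ y _ a b _ _ hab
    simp only [smul_eq_mul]
    apply le_of_eq
    have : b = 1 - a := by linarith
    subst this
    ring

lemma g_le_left (l : List (ℕ × ℕ)) : ∀ (x0 : ℕ) (x s : ℝ), Good l → 0 ≤ s →
    (∀ e ∈ l, (e.2 : ℝ) / e.1 ≤ s) → x ≤ x0 → g x0 l x ≤ sY l - s * (x - x0) := by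
  induction l with
  | nil =>
    intro x0 x s _ hs _ hx
    simp only [g, sY]
    push_cast
    nlinarith
  | cons e l ih =>
    intro x0 x s hl hs he hx
    have hpos := hl.1 e (by simp)
    have hu : (0 : ℝ) < e.1 := by exact_mod_cast hpos.1
    have h1 : (e.2 : ℝ) / e.1 ≤ s := he e (by simp)
    have h2 := mul_le_mul_of_nonpos_right h1 (sub_nonpos.2 hx)
    have h3 := ih (x0 + e.1) x ((e.2 : ℝ) / e.1) hl.tail (by positivity)
      (fun f hf => (List.pairwise_cons.1 hl.2).1 f hf) (by push_cast; linarith)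
    have h4 : (e.2 : ℝ) / e.1 * e.1 = e.2 := by field_simp
    simp only [g, sY]
    push_cast at *
    refine max_le (by linarith) ?_
    refine h3.trans ?_
    have : (e.2 : ℝ) / e.1 * (x - (x0 + e.1)) = (e.2 : ℝ) / e.1 * (x - x0) - e.2 := by
      linear_combination -h4
    rw [this]; linarith

lemma le_g_right (l : List (ℕ × ℕ)) (x0 : ℕ) (x s : ℝ) (hs : 0 ≤ s)
    (he : ∀ e ∈ l, (e.2 : ℝ) / e.1 ≤ s) (hx : x0 ≤ x) : sY l - s * (x - x0) ≤ g x0 l x := by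
  cases l with
  | nil => simp only [g, sY]; push_cast; nlinarith
  | cons e l =>
    refine le_trans ?_ (le_max_left _ _)
    have h2 := mul_le_mul_of_nonneg_right (he e (by simp)) (sub_nonneg.2 hx)
    simp only [sY]
    push_cast
    linarith

lemma g_left {e : ℕ × ℕ} {l : List (ℕ × ℕ)} (h : Good (e :: l)) (x0 : ℕ) (x : ℝ)
    (hx : x ≤ x0 + e.1) :
    g x0 (e :: l) x = ((e.2 : ℝ) + sY l) - (e.2 : ℝ) / e.1 * (x - x0) := by
  have hpos := h.1 e (by simp)
  have hu : (0 : ℝ) < e.1 := by exact_mod_cast hpos.1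
  have h3 := g_le_left l (x0 + e.1) x ((e.2 : ℝ) / e.1) h.tail (by positivity)
      (fun f hf => (List.pairwise_cons.1 h.2).1 f hf) (by push_cast; linarith)
  have h4 : (e.2 : ℝ) / e.1 * e.1 = e.2 := by field_simp
  apply max_eq_left
  refine h3.trans (le_of_eq ?_)
  push_cast
  linear_combination h4

lemma g_right {e : ℕ × ℕ} {l : List (ℕ × ℕ)} (h : Good (e :: l)) (x0 : ℕ) (x : ℝ)
    (hx : x0 + e.1 ≤ x) : g x0 (e :: l) x = g (x0 + e.1) l x := by
  have hpos := h.1 e (by simp)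
  have hu : (0 : ℝ) < e.1 := by exact_mod_cast hpos.1
  have h3 := le_g_right l (x0 + e.1) x ((e.2 : ℝ) / e.1) (by positivity)
      (fun f hf => (List.pairwise_cons.1 h.2).1 f hf) (by push_cast; linarith)
  have h4 : (e.2 : ℝ) / e.1 * e.1 = e.2 := by field_simp
  apply max_eq_right
  refine le_trans (le_of_eq ?_) h3
  push_cast
  linear_combination -h4

lemma g_start (l : List (ℕ × ℕ)) (x0 : ℕ) (h : Good l) : g x0 l x0 = sY l := by
  cases l with
  | nil => simp [g, sY]
  | cons e l => rw [g_left h x0 x0 (by simp)]; simp [sY]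

lemma g_end (l : List (ℕ × ℕ)) : ∀ (x0 : ℕ) (x : ℝ), Good l → (x0 : ℝ) + sX l ≤ x →
    g x0 l x = 0 := by
  induction l with
  | nil => intros; rfl
  | cons e l ih =>
    intro x0 x h hx
    simp only [sX] at hx
    push_cast at hx
    have : (0 : ℝ) ≤ sX l := by positivity
    rw [g_right h x0 x (by linarith)]
    exact ih _ x h.tail (by push_cast; linarith)

lemma g_pos (l : List (ℕ × ℕ)) : ∀ (x0 : ℕ) (x : ℝ), Good l → x0 ≤ x → x < (x0 : ℝ) + sX l →
    0 < g x0 l x := by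
  induction l with
  | nil => intro x0 x _ h1 h2; simp [sX] at h2; linarith
  | cons e l ih =>
    intro x0 x h h1 h2
    simp only [sX] at h2
    push_cast at h2
    rcases lt_or_ge x (x0 + e.1) with h3 | h3
    · rw [g_left h x0 x h3.le]
      have hpos := h.1 e (by simp)
      have hu : (0 : ℝ) < e.1 := by exact_mod_cast hpos.1
      have hv : (0 : ℝ) < e.2 := by exact_mod_cast hpos.2
      have h4 : (e.2 : ℝ) / e.1 * e.1 = e.2 := by field_simp
      have h5 : (e.2 : ℝ) / e.1 * (x - x0) < (e.2 : ℝ) / e.1 * e.1 :=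
        mul_lt_mul_of_pos_left (by linarith) (by positivity)
      have : (0 : ℝ) ≤ sY l := by positivity
      linarith
    · rw [g_right h x0 x h3]
      exact ih _ x h.tail (by push_cast; linarith) (by push_cast; linarith)

/-- twice the area below the chain -/
def A2 : List (ℕ × ℕ) → ℤ
  | [] => 0
  | e :: l => (e.1 : ℤ) * e.2 + 2 * e.1 * sY l + A2 l

lemma g_int (l : List (ℕ × ℕ)) : ∀ (x0 : ℕ), Good l →
    ∫ x in (x0 : ℝ)..(x0 + sX l), g x0 l x = (A2 l : ℝ) / 2 := by
  induction l with
  | nil => intro x0 _; simp [sX, A2]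
  | cons e l ih =>
    intro x0 h
    have hpos := h.1 e (by simp)
    have hu : (0 : ℝ) < e.1 := by exact_mod_cast hpos.1
    have hU : (0 : ℝ) ≤ sX l := by positivity
    have hc := g_cont (e :: l) x0
    rw [← intervalIntegral.integral_add_adjacent_intervals (b := (x0 : ℝ) + e.1)
      (hc.intervalIntegrable _ _) (hc.intervalIntegrable _ _)]
    have e1 : ∫ x in (x0 : ℝ)..(x0 + e.1), g x0 (e :: l) x =
        ∫ x in (x0 : ℝ)..(x0 + e.1),
          (((e.2 : ℝ) + sY l) - (e.2 : ℝ) / e.1 * (x - x0)) := by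
      apply intervalIntegral.integral_congr
      intro x hx
      rw [Set.uIcc_of_le (by linarith)] at hx
      exact g_left h x0 x hx.2
    have e2 : ∫ x in ((x0 : ℝ) + e.1)..(x0 + sX (e :: l)), g x0 (e :: l) x =
        ∫ x in (((x0 + e.1 : ℕ) : ℝ))..(((x0 + e.1 : ℕ) : ℝ) + sX l), g (x0 + e.1) l x := by
      have hh : ((x0 : ℝ) + sX (e :: l)) = ((x0 + e.1 : ℕ) : ℝ) + sX l := by
        simp only [sX]; push_cast; ring
      rw [hh, Nat.cast_add]
      apply intervalIntegral.integral_congr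
      intro x hx
      rw [Set.uIcc_of_le (by linarith)] at hx
      exact g_right h x0 x hx.1
    rw [e1, e2, ih _ h.tail]
    have e3 : ∫ x in (x0 : ℝ)..(x0 + e.1),
          (((e.2 : ℝ) + sY l) - (e.2 : ℝ) / e.1 * (x - x0)) =
          (e.2 + sY l) * e.1 - (e.2 : ℝ) * e.1 / 2 := by
      rw [intervalIntegral.integral_sub (by simp)
        (Continuous.intervalIntegrable (by fun_prop) _ _)]
      rw [intervalIntegral.integral_const_mul,
        intervalIntegral.integral_sub (by simp) (by simp)]
      simp
      field_simp
      ring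
    rw [e3]
    simp only [A2]
    push_cast
    ring

def G (l : List (ℕ × ℕ)) : Set (ℝ × ℝ) := {v | 0 ≤ v.1 ∧ g 0 l v.1 ≤ v.2}

lemma first_mem (x0 : ℕ) (l : List (ℕ × ℕ)) : (x0, sY l) ∈ verts x0 l := by
  cases l <;> simp [verts, sY]

lemma last_mem (l : List (ℕ × ℕ)) : ∀ (x0 : ℕ), (x0 + sX l, 0) ∈ verts x0 l := by
  induction l with
  | nil => intro x0; simp [verts, sX]
  | cons e l ih =>
    intro x0
    have := ih (x0 + e.1)
    simp only [verts, sX, Finset.mem_insert]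
    right
    rwa [← add_assoc]

/-- each vertex lies above the graph -/
lemma verts_above (l : List (ℕ × ℕ)) : ∀ (x0 : ℕ), Good l → ∀ w ∈ verts x0 l,
    x0 ≤ w.1 ∧ g x0 l w.1 ≤ w.2 := by
  induction l with
  | nil => intro x0 _ w hw; simp [verts] at hw; subst hw; simp [g]
  | cons e l ih =>
    intro x0 h w hw
    simp only [verts, Finset.mem_insert] at hw
    rcases hw with rfl | hw
    · refine ⟨le_rfl, ?_⟩
      dsimp only
      rw [g_start _ _ h]; simp [sY]
    · obtain ⟨h1, h2⟩ := ih (x0 + e.1) h.tail w hw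
      refine ⟨by omega, ?_⟩
      rw [g_right h x0 _ (by exact_mod_cast h1)]
      exact h2

lemma above_mem (l : List (ℕ × ℕ)) (H : Set (ℝ × ℝ)) (hH : Convex ℝ H)
    (hup : ∀ v ∈ H, ∀ w : ℝ × ℝ, v.1 ≤ w.1 → v.2 ≤ w.2 → w ∈ H) :
    ∀ (x0 : ℕ), Good l → (∀ w ∈ verts x0 l, ((w.1 : ℝ), (w.2 : ℝ)) ∈ H) →
    ∀ x y : ℝ, x0 ≤ x → g x0 l x ≤ y → (x, y) ∈ H := by
  induction l with
  | nil =>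
    intro x0 _ hv x y hx hy
    exact hup _ (hv (x0, 0) (by simp [verts])) _ hx (by simpa [g] using hy)
  | cons e l ih =>
    intro x0 h hv x y hx hy
    have hv' : ∀ w ∈ verts (x0 + e.1) l, ((w.1 : ℝ), (w.2 : ℝ)) ∈ H :=
      fun w hw => hv w (by simp [verts, hw])
    rcases le_total x (x0 + e.1) with h1 | h1
    · have m1 := hv _ (first_mem x0 (e :: l))
      have m2 := hv' _ (first_mem (x0 + e.1) l)
      have hpos := h.1 e (by simp)
      have hu : (0 : ℝ) < e.1 := by exact_mod_cast hpos.1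
      rw [g_left h x0 x h1] at hy
      have t0 : 0 ≤ (x - x0) / e.1 := div_nonneg (by linarith) hu.le
      have t1 : (x - x0) / e.1 ≤ 1 := by rw [div_le_one hu]; linarith
      have := hH m1 m2 (sub_nonneg.2 t1) t0 (by ring)
      refine hup _ this _ ?_ ?_
      · simp
        field_simp
        linarith
      · refine le_trans (le_of_eq ?_) hy
        simp [sY]
        field_simp
        ring
    · rw [g_right h x0 x h1] at hy
      exact ih (x0 + e.1) h.tail hv' x y (by push_cast; linarith) hy

lemma gammaPlus_eq (l : List (ℕ × ℕ)) (h : Good l) : GammaPlus (verts 0 l) = G l := by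
  apply Set.Subset.antisymm
  · have hc : Convex ℝ (G l) := by
      intro v hv w hw a b ha hb hab
      have := (g_convex l 0).2 (Set.mem_univ v.1) (Set.mem_univ w.1) ha hb hab
      simp only [smul_eq_mul] at this
      refine ⟨?_, ?_⟩
      · have h1 := hv.1
        have h2 := hw.1
        simp
        positivity
      · simp only [Prod.fst_add, Prod.snd_add, Prod.smul_fst, Prod.smul_snd, smul_eq_mul]
        have h1 := mul_le_mul_of_nonneg_left hv.2 ha
        have h2 := mul_le_mul_of_nonneg_left hw.2 hb
        linarith
    have hsub : convexHull ℝ ((fun v : ℕ × ℕ => ((v.1 : ℝ), (v.2 : ℝ))) '' (verts 0 l : Set (ℕ × ℕ)))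
        ⊆ G l := by
      apply convexHull_min _ hc
      rintro _ ⟨w, hw, rfl⟩
      obtain ⟨h1, h2⟩ := verts_above l 0 h w (by simpa using hw)
      exact ⟨by simp, h2⟩
    rintro _ ⟨v, hv, w, hw, rfl⟩
    have hv' := hsub hv
    refine ⟨add_nonneg hv'.1 hw.1, ?_⟩
    have : g 0 l (v.1 + w.1) ≤ g 0 l v.1 := g_anti l 0 (by linarith [hw.1])
    have h1 := hv'.2
    have h2 := hw.2
    simp only [Prod.fst_add, Prod.snd_add]
    linarith
  · rintro ⟨x, y⟩ ⟨h1, h2⟩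
    refine above_mem l (GammaPlus (verts 0 l)) ?_ ?_ 0 h ?_ x y (by simpa using h1) h2
    · refine (convex_convexHull ℝ _).add ?_
      intro v hv w hw a b ha hb hab
      have := hv.1
      have := hv.2
      have := hw.1
      have := hw.2
      refine ⟨?_, ?_⟩ <;> simp <;> positivity
    · rintro _ ⟨v, hv, w, hw, rfl⟩ z hz1 hz2
      refine ⟨v, hv, z - v, ⟨?_, ?_⟩, by simp⟩
      · have := hw.1
        simp at *; linarith
      · have := hw.2
        simp at *; linarith
    · intro w hw
      refine ⟨_, subset_convexHull ℝ _ ⟨w, by simpa using hw, rfl⟩, 0, by simp, by simp⟩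

lemma axisA_eq (l : List (ℕ × ℕ)) (h : Good l) : axisA (verts 0 l) = sX l := by
  have : {x : ℝ | (x, (0 : ℝ)) ∈ GammaPlus (verts 0 l)} = Set.Ici (sX l : ℝ) := by
    rw [gammaPlus_eq l h]
    ext x
    constructor
    · rintro ⟨h1, h2⟩
      by_contra hx
      have hx' : x < sX l := not_le.1 hx
      have := g_pos l 0 x h (by simpa using h1) (by simpa using hx')
      simp at h2
      linarith
    · intro hx
      have hx' : (sX l : ℝ) ≤ x := hx
      have : (0 : ℝ) ≤ sX l := by positivity
      exact ⟨by simp; linarith, by simp [g_end l 0 x h (by simpa using hx')]⟩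
  rw [axisA, this, csInf_Ici]

lemma axisB_eq (l : List (ℕ × ℕ)) (h : Good l) : axisB (verts 0 l) = sY l := by
  have : {y : ℝ | ((0 : ℝ), y) ∈ GammaPlus (verts 0 l)} = Set.Ici (sY l : ℝ) := by
    rw [gammaPlus_eq l h]
    ext y
    have := g_start l 0 h
    simp only [Nat.cast_zero] at this
    simp [G, this]
  rw [axisB, this, csInf_Ici]

lemma areaS_eq (l : List (ℕ × ℕ)) (h : Good l) : areaS (verts 0 l) = (A2 l : ℝ) / 2 := by
  rw [areaS, gammaPlus_eq l h]
  have hs : ({v : ℝ × ℝ | 0 ≤ v.1 ∧ 0 ≤ v.2} \ G l) =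
      {v : ℝ × ℝ | 0 ≤ v.1 ∧ 0 ≤ v.2 ∧ v.2 < g 0 l v.1} := by
    ext v
    simp only [G, Set.mem_diff, Set.mem_setOf_eq, not_and, not_le]
    tauto
  have hc := g_cont l 0
  have hm : MeasurableSet {v : ℝ × ℝ | 0 ≤ v.1 ∧ 0 ≤ v.2 ∧ v.2 < g 0 l v.1} := by
    refine (measurableSet_le measurable_const measurable_fst).inter
      ((measurableSet_le measurable_const measurable_snd).inter
      (measurableSet_lt measurable_snd (hc.measurable.comp measurable_fst)))
  rw [hs, Measure.volume_eq_prod, Measure.prod_apply hm]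
  have hfib : ∀ x : ℝ, volume (Prod.mk x ⁻¹' {v : ℝ × ℝ | 0 ≤ v.1 ∧ 0 ≤ v.2 ∧ v.2 < g 0 l v.1})
      = (Set.Ioc (0 : ℝ) (sX l)).indicator (fun x => ENNReal.ofReal (g 0 l x)) x ∨ x = 0 := by
    intro x
    rcases lt_trichotomy x 0 with hx | hx | hx
    · left
      have e : (Prod.mk x ⁻¹' {v : ℝ × ℝ | 0 ≤ v.1 ∧ 0 ≤ v.2 ∧ v.2 < g 0 l v.1}) = ∅ := by
        ext y; simp; intro h; linarith
      rw [e, Set.indicator_of_notMem (by simp; intro h; linarith)]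
      simp
    · right; exact hx
    · left
      have e : (Prod.mk x ⁻¹' {v : ℝ × ℝ | 0 ≤ v.1 ∧ 0 ≤ v.2 ∧ v.2 < g 0 l v.1})
          = Set.Ico 0 (g 0 l x) := by
        ext y; simp [hx.le]
      rw [e, Real.volume_Ico, sub_zero]
      by_cases hx2 : x ≤ sX l
      · rw [Set.indicator_of_mem (show x ∈ Set.Ioc (0 : ℝ) (sX l) from ⟨hx, hx2⟩)]
      · rw [Set.indicator_of_notMem (fun h => hx2 h.2), g_end l 0 x h (by simp; linarith)]
        simp
  have hae : (fun x : ℝ => volume (Prod.mk x ⁻¹' {v : ℝ × ℝ | 0 ≤ v.1 ∧ 0 ≤ v.2 ∧ v.2 < g 0 l v.1}))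
      =ᵐ[volume] (Set.Ioc (0 : ℝ) (sX l)).indicator (fun x => ENNReal.ofReal (g 0 l x)) := by
    have : ∀ᵐ x : ℝ, x ≠ 0 := by simp [ae_iff]
    filter_upwards [this] with x hx
    exact (hfib x).resolve_right hx
  rw [lintegral_congr_ae hae, lintegral_indicator measurableSet_Ioc]
  have hi := g_int l 0 h
  simp only [Nat.cast_zero, zero_add] at hi
  rw [intervalIntegral.integral_of_le (by positivity),
    integral_eq_lintegral_of_nonneg_ae (Filter.Eventually.of_forall (g_nonneg l 0))
      hc.aestronglyMeasurable] at hi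
  exact hi

def tr (k : ℕ) (e : ℕ × ℕ) : ℕ × ℕ := (e.1 + e.2, (k + 1) * e.1 + k * e.2)

lemma tr_aux (k : ℕ) (l : List (ℕ × ℕ)) :
    sX (l.map (tr k)) = sX l + sY l ∧
    sY (l.map (tr k)) = (k + 1) * sX l + k * sY l ∧
    A2 (l.map (tr k)) = ((sX l : ℤ) + sY l) * ((k + 1) * sX l + k * sY l) - D l := by
  induction l with
  | nil => simp [D, sX, sY, A2]
  | cons f l ih =>
    obtain ⟨h1, h2, h3⟩ := ih
    simp only [List.map_cons, sX, sY, D, A2, h1, h2, h3, tr]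
    refine ⟨by ring, by ring, by push_cast; ring⟩

lemma attain (p q k r : ℕ) (d : ℤ) (hq : q = k * p + r) (hk : 0 < k) (hrp : r < p)
    (h : Ach r (p - r) d) :
    Attainable {(p, 0), (0, q)} (((p : ℤ) - 1) * ((q : ℤ) - 1) - d) := by
  obtain ⟨l, h0, h1, h2, h3, h4⟩ := h
  obtain ⟨r1, r2, r3⟩ := tr_aux k l
  obtain ⟨b, rfl⟩ := Nat.exists_eq_add_of_le hrp.le
  have hb : sY l = b := by omega
  rw [h1, hb] at r1
  have r2' : sY (l.map (tr k)) = q := by rw [r2, h1, hb, hq]; ring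
  have hgood : Good (l.map (tr k)) := by
    refine ⟨?_, ?_⟩
    · intro e he
      simp only [List.mem_map] at he
      obtain ⟨f, hf, rfl⟩ := he
      have := h0 f hf
      simp only [tr]
      refine ⟨this, ?_⟩
      nlinarith
    · rw [List.pairwise_map]
      refine List.Pairwise.imp_of_mem ?_ h3
      intro e f he hf hef
      have h5 : (0 : ℝ) < ((e.1 + e.2 : ℕ) : ℝ) := by exact_mod_cast h0 e he
      have h6 : (0 : ℝ) < ((f.1 + f.2 : ℕ) : ℝ) := by exact_mod_cast h0 f hf
      simp only [tr]
      rw [div_le_div_iff₀ h6 h5]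
      norm_cast
      nlinarith
  refine ⟨verts 0 (l.map (tr k)), ?_⟩
  have hu : ({(r + b, 0), (0, q)} : Finset (ℕ × ℕ)) ∪ verts 0 (l.map (tr k))
      = verts 0 (l.map (tr k)) := by
    rw [Finset.union_eq_right]
    intro w hw
    simp only [Finset.mem_insert, Finset.mem_singleton] at hw
    rcases hw with rfl | rfl
    · have := last_mem (l.map (tr k)) 0
      rwa [zero_add, r1] at this
    · have := first_mem 0 (l.map (tr k))
      rwa [r2'] at this
  rw [hu, newtonNumber, areaS_eq _ hgood, axisA_eq _ hgood, axisB_eq _ hgood, r3, r1, r2', h1, hb,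
    h4, hq]
  push_cast
  ring

end NJ

/-- opening terms of the sequence of jumps of Newton numbers for
`tr(p,q)` when `gcd(p,q) = m < p`. -/
theorem stmt_2 (p q k r m : ℕ) (ν : ℤ)
    (hp : 2 ≤ p) (hpq : p ≤ q) (hm : m = Nat.gcd p q) (hmp : m < p)
    (hq : q = k * p + r) (hr0 : 0 < r) (hrp : r < p)
    (hν : ν = ((p : ℤ) - 1) * ((q : ℤ) - 1)) :
    Attainable {(p, 0), (0, q)} ν ∧
    ∀ n : ℤ, ν - (r : ℤ) * ((p : ℤ) - r) ≤ n → n ≤ ν - m →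
      Attainable {(p, 0), (0, q)} n := by
  have hk : 0 < k := by
    rcases Nat.eq_zero_or_pos k with rfl | h
    · omega
    · exact h
  subst hν
  constructor
  · simpa using NJ.attain p q k r 0 hq hk hrp (NJ.ach_zero _ _ (by omega))
  · intro n h1 h2
    have hg : Nat.gcd r (p - r) = m := by
      rw [Nat.gcd_sub_self_right hrp.le, hm, hq, Nat.gcd_comm p]
      simp [Nat.gcd_comm]
    have := NJ.attain p q k r (((p : ℤ) - 1) * ((q : ℤ) - 1) - n) hq hk hrp
      (NJ.ach_main _ r (p - r) rfl hr0 (by omega) _ (by rw [hg]; linarith)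
        (by rw [Nat.cast_sub hrp.le]; linarith))
    simpa using this
end
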